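/- arXiv:2509.00296 — 8 statements merged into one kernel-verified Lean document; each statement's English description precedes it below -/
import Mathlib

section
/- For all natural numbers j and k, the Legendre polynomials satisfy the orthogonality relation ∫_{-1}^{1} L_j(x) L_k(x) dx = 2/(2k+1) if j = k, and ∫_{-1}^{1} L_j(x) L_k(x) dx = 0 if j ≠ k. -/
/-!
The derivative identities `(n+1) L_n = L_{n+1}' - x L_n'` and `(n+1) L_{n+1} = x L_{n+1}' - L_n'`
follow from the three-term recurrence by a joint induction (`legendre_derivative`); everything else
is polynomial algebra and the fundamental theorem of calculus.

* They imply Legendre's equation `((x² - 1) L_n')' = n (n+1) L_n`, so that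
  `(j(j+1) - k(k+1)) L_j L_k` is the derivative of `(x² - 1)(L_j' L_k - L_j L_k')`, which vanishes
  at `±1`. This gives orthogonality for `j ≠ k`.
* They also imply that `(2n+3) L_{n+1}² - (2n+1) L_n²` is the derivative of
  `x (L_{n+1}² + L_n²) - 2 L_n L_{n+1}`, which equals `±(L_{n+1} ∓ L_n)²` at `±1` and vanishes there.
  Hence `(2n+1) ∫ L_n²` does not depend on `n`, and it equals `2` for `n = 0`.
-/

/-- The Legendre polynomials, defined by the recurrence
`L₀ = 1`, `L₁ = X`, `(k+1) L_{k+1}(x) = (2k+1) x L_k(x) - k L_{k-1}(x)`. -/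
noncomputable def legendre : ℕ → Polynomial ℝ
  | 0 => 1
  | 1 => Polynomial.X
  | (k + 2) =>
      Polynomial.C ((2 * (k : ℝ) + 3) / ((k : ℝ) + 2)) * (Polynomial.X * legendre (k + 1))
        - Polynomial.C (((k : ℝ) + 1) / ((k : ℝ) + 2)) * legendre k

open Polynomial in
theorem legendre_rec (k : ℕ) :
    ((k : ℝ[X]) + 2) * legendre (k + 2) =
      (2 * (k : ℝ[X]) + 3) * (X * legendre (k + 1)) - ((k : ℝ[X]) + 1) * legendre k := by
  have hk : (k : ℝ) + 2 ≠ 0 := by positivity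
  have h0 : (k : ℝ[X]) + 2 = C ((k : ℝ) + 2) := by simp [map_ofNat C]
  have h1 : C ((k : ℝ) + 2) * C ((2 * (k : ℝ) + 3) / ((k : ℝ) + 2)) = 2 * (k : ℝ[X]) + 3 := by
    rw [← C_mul, mul_div_cancel₀ _ hk]; simp [map_ofNat C]
  have h2 : C ((k : ℝ) + 2) * C (((k : ℝ) + 1) / ((k : ℝ) + 2)) = (k : ℝ[X]) + 1 := by
    rw [← C_mul, mul_div_cancel₀ _ hk]; simp
  rw [h0, legendre]
  linear_combination (X * legendre (k + 1)) * h1 - legendre k * h2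

open Polynomial in
theorem legendre_derivative (n : ℕ) :
    ((n : ℝ[X]) + 1) * legendre n =
        derivative (legendre (n + 1)) - X * derivative (legendre n) ∧
      ((n : ℝ[X]) + 1) * legendre (n + 1) =
        X * derivative (legendre (n + 1)) - derivative (legendre n) := by
  induction n with
  | zero => simp [legendre]
  | succ k ih =>
    obtain ⟨hA, hB⟩ := ih
    have hr := legendre_rec k
    have hd := congrArg derivative hr
    simp only [derivative_mul, derivative_add, derivative_sub, derivative_natCast,
      derivative_ofNat, derivative_X, derivative_one] at hd
    have hk : (k : ℝ[X]) + 2 ≠ 0 := by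
      exact_mod_cast (Nat.cast_ne_zero (R := ℝ[X])).2 (by omega : k + 2 ≠ 0)
    have hA' : ((k : ℝ[X]) + 2) * legendre (k + 1) =
        derivative (legendre (k + 2)) - X * derivative (legendre (k + 1)) := by
      apply mul_left_cancel₀ hk
      linear_combination ((k : ℝ[X]) + 1) * hB - hd
    push_cast
    constructor
    · linear_combination hA'
    · linear_combination hr + X * hA' + X * hB - hA

open Polynomial in
/-- Legendre's differential equation `((x² - 1) L_n')' = n (n+1) L_n`. -/
theorem legendre_ode (n : ℕ) :
    derivative ((X ^ 2 - 1) * derivative (legendre n)) =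
      (n : ℝ[X]) * ((n : ℝ[X]) + 1) * legendre n := by
  cases n with
  | zero => simp [legendre]
  | succ k =>
    obtain ⟨hA, hB⟩ := legendre_derivative k
    have h : (X ^ 2 - 1) * derivative (legendre (k + 1)) =
        ((k : ℝ[X]) + 1) * (X * legendre (k + 1) - legendre k) := by
      linear_combination hA - X * hB
    rw [h]
    simp only [derivative_mul, derivative_add, derivative_sub, derivative_natCast,
      derivative_X, derivative_one]
    push_cast
    linear_combination -((k : ℝ[X]) + 1) * hB

open Polynomial in
theorem integral_eval_derivative (p : ℝ[X]) :
    ∫ x in (-1 : ℝ)..1, (derivative p).eval x = p.eval 1 - p.eval (-1) :=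
  intervalIntegral.integral_eq_sub_of_hasDerivAt (fun x _ => p.hasDerivAt x)
    ((derivative p).continuous.intervalIntegrable _ _)

open Polynomial in
theorem legendre_integral_of_ne {j k : ℕ} (hjk : j ≠ k) :
    ∫ x in (-1 : ℝ)..1, (legendre j).eval x * (legendre k).eval x = 0 := by
  have hj := legendre_ode j
  have hk := legendre_ode k
  have key : derivative ((X ^ 2 - 1) * derivative (legendre j) * legendre k
        - (X ^ 2 - 1) * derivative (legendre k) * legendre j) =
      ((j : ℝ[X]) * ((j : ℝ[X]) + 1) - (k : ℝ[X]) * ((k : ℝ[X]) + 1)) * (legendre j * legendre k) := by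
    rw [derivative_sub, derivative_mul (g := legendre k), derivative_mul (g := legendre j), hj, hk]
    ring
  have h := integral_eval_derivative ((X ^ 2 - 1) * derivative (legendre j) * legendre k
        - (X ^ 2 - 1) * derivative (legendre k) * legendre j)
  rw [key] at h
  simp only [eval_mul, eval_sub, eval_add, eval_natCast, eval_one, eval_pow, eval_X,
    intervalIntegral.integral_const_mul] at h
  norm_num at h
  refine h.resolve_left fun h0 => hjk ?_
  -- `j(j+1) - k(k+1) = (j - k)(j + k + 1)`, and the second factor is positive
  have h1 : ((j : ℝ) - k) * (j + k + 1) = 0 := by linear_combination h0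
  have h2 : (j : ℝ) + k + 1 ≠ 0 := by positivity
  exact_mod_cast sub_eq_zero.1 ((mul_eq_zero.1 h1).resolve_right h2)

open Polynomial in
theorem legendre_integral_sq_succ (n : ℕ) :
    (2 * (n : ℝ) + 3) * ∫ x in (-1 : ℝ)..1, (legendre (n + 1)).eval x * (legendre (n + 1)).eval x =
      (2 * (n : ℝ) + 1) * ∫ x in (-1 : ℝ)..1, (legendre n).eval x * (legendre n).eval x := by
  obtain ⟨hA, hB⟩ := legendre_derivative n
  have key : derivative (X * (legendre (n + 1) ^ 2 + legendre n ^ 2)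
        - 2 * (legendre n * legendre (n + 1))) =
      (2 * (n : ℝ[X]) + 3) * (legendre (n + 1) * legendre (n + 1))
        - (2 * (n : ℝ[X]) + 1) * (legendre n * legendre n) := by
    simp only [derivative_mul, derivative_add, derivative_sub, derivative_pow,
      derivative_ofNat, derivative_X]
    simp only [Nat.cast_ofNat, map_ofNat]
    linear_combination 2 * legendre n * hA - 2 * legendre (n + 1) * hB
  have hn : (n : ℝ) + 1 ≠ 0 := by positivity
  -- comparing the two derivative identities at `1` and `-1` gives the boundary values
  have e1 : (legendre (n + 1)).eval 1 = (legendre n).eval 1 := by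
    have a := congrArg (eval 1) hA
    have b := congrArg (eval 1) hB
    simp only [eval_mul, eval_sub, eval_add, eval_natCast, eval_one, eval_X] at a b
    apply mul_left_cancel₀ hn
    linear_combination b - a
  have e2 : (legendre (n + 1)).eval (-1) = -(legendre n).eval (-1) := by
    have a := congrArg (eval (-1)) hA
    have b := congrArg (eval (-1)) hB
    simp only [eval_mul, eval_sub, eval_add, eval_natCast, eval_one, eval_X] at a b
    apply mul_left_cancel₀ hn
    linear_combination b + a
  have h := integral_eval_derivative (X * (legendre (n + 1) ^ 2 + legendre n ^ 2)
        - 2 * (legendre n * legendre (n + 1)))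
  rw [key] at h
  simp only [eval_mul, eval_sub, eval_add, eval_natCast, eval_one, eval_pow, eval_X,
    eval_ofNat, e1, e2] at h
  rw [intervalIntegral.integral_sub
      (Continuous.intervalIntegrable (by fun_prop) _ _)
      (Continuous.intervalIntegrable (by fun_prop) _ _),
    intervalIntegral.integral_const_mul, intervalIntegral.integral_const_mul] at h
  linear_combination h

theorem legendre_integral_sq (n : ℕ) :
    (2 * (n : ℝ) + 1) * ∫ x in (-1 : ℝ)..1, (legendre n).eval x * (legendre n).eval x = 2 := by
  induction n with
  | zero => norm_num [legendre]
  | succ k ih =>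
    have h := legendre_integral_sq_succ k
    push_cast
    linear_combination h + ih

/-- Orthogonality of the Legendre polynomials on `[-1, 1]`:
`∫_{-1}^{1} L_j(x) L_k(x) dx = 2/(2k+1)` if `j = k`, and `0` otherwise. -/
theorem legendre_orthogonality (j k : ℕ) :
    ∫ x in (-1 : ℝ)..1, (legendre j).eval x * (legendre k).eval x
      = if j = k then 2 / (2 * (k : ℝ) + 1) else 0 := by
  split_ifs with h
  · subst h
    rw [eq_div_iff (by positivity), mul_comm]
    exact legendre_integral_sq j
  · exact legendre_integral_of_ne h
end

section
/- For every natural number m, the monomial x^m has the Legendre expansion x^m = ∑_{s=0}^{⌊m/2⌋} β_{m-2s,s} L_{m-2s}(x), where β_{q,s} = (2q+1)·(q+2s)! / ( (2s)!! · (2(q+s)+1)!! ). -/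
/-- The even double factorial `(2s)!! = 2^s · s!` (as a real number). -/
noncomputable def evenDoubleFactorial (s : ℕ) : ℝ := 2 ^ s * (Nat.factorial s : ℝ)

/-- The odd double factorial `(2m+1)!! = (2m+1)!/(2^m · m!)` (as a real number). -/
noncomputable def oddDoubleFactorial (m : ℕ) : ℝ :=
  (Nat.factorial (2 * m + 1) : ℝ) / (2 ^ m * (Nat.factorial m : ℝ))

/-- The coefficient `β_{q,s} = (2q+1)·(q+2s)! / ((2s)!! · (2(q+s)+1)!!)`. -/
noncomputable def betaCoeff (q s : ℕ) : ℝ :=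
  (2 * (q : ℝ) + 1) * (Nat.factorial (q + 2 * s) : ℝ)
    / (evenDoubleFactorial s * oddDoubleFactorial (q + s))

open Polynomial

lemma evenDoubleFactorial_pos (s : ℕ) : 0 < evenDoubleFactorial s := by
  unfold evenDoubleFactorial; positivity

lemma oddDoubleFactorial_pos (n : ℕ) : 0 < oddDoubleFactorial n := by
  unfold oddDoubleFactorial; positivity

lemma evenDoubleFactorial_succ (s : ℕ) :
    evenDoubleFactorial (s + 1) = (2 * s + 2) * evenDoubleFactorial s := by
  unfold evenDoubleFactorial
  rw [Nat.factorial_succ]; push_cast; ring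

lemma oddDoubleFactorial_succ (n : ℕ) :
    oddDoubleFactorial (n + 1) = (2 * n + 3) * oddDoubleFactorial n := by
  unfold oddDoubleFactorial
  rw [show 2 * (n + 1) + 1 = (2 * n + 1) + 1 + 1 by ring, Nat.factorial_succ (2 * n + 1 + 1),
    Nat.factorial_succ (2 * n + 1), Nat.factorial_succ n]
  have := Nat.cast_pos (α := ℝ).2 n.factorial_pos
  push_cast
  field_simp
  ring

lemma betaCoeff_zero_zero : betaCoeff 0 0 = 1 := by
  simp [betaCoeff, evenDoubleFactorial, oddDoubleFactorial]

lemma betaCoeff_succ_zero (q : ℕ) :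
    betaCoeff (q + 1) 0 = betaCoeff q 0 * ((q + 1) / (2 * q + 1)) := by
  have h1 := evenDoubleFactorial_pos 0
  have h2 := oddDoubleFactorial_pos q
  simp only [betaCoeff, mul_zero, add_zero, oddDoubleFactorial_succ, Nat.factorial_succ]
  push_cast
  field_simp
  ring

lemma betaCoeff_zero_succ (s : ℕ) :
    betaCoeff 0 (s + 1) = betaCoeff 1 s * (1 / 3) := by
  have h1 := evenDoubleFactorial_pos s
  have h2 := oddDoubleFactorial_pos (s + 1)
  simp only [betaCoeff, evenDoubleFactorial_succ, zero_add]
  rw [show 2 * (s + 1) = (1 + 2 * s) + 1 by ring, Nat.factorial_succ, add_comm 1 s]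
  push_cast
  field_simp
  ring

/-- The relation between the coefficients that makes the expansion stable under multiplication
by `X`. -/
lemma betaCoeff_succ_succ (r s : ℕ) :
    betaCoeff (r + 1) (s + 1) =
      betaCoeff (r + 2) s * ((r + 2) / (2 * r + 5))
        + betaCoeff r (s + 1) * ((r + 1) / (2 * r + 1)) := by
  have h1 := evenDoubleFactorial_pos s
  have h2 := oddDoubleFactorial_pos (r + s + 1)
  simp only [betaCoeff, evenDoubleFactorial_succ]
  rw [show r + 1 + 2 * (s + 1) = (r + 2 * s + 2) + 1 by ring,
    show r + 2 + 2 * s = r + 2 * s + 2 by ring,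
    show r + 2 * (s + 1) = r + 2 * s + 2 by ring,
    show r + 1 + (s + 1) = (r + s + 1) + 1 by ring,
    show r + 2 + s = (r + s + 1) + 1 by ring,
    show r + (s + 1) = r + s + 1 by ring,
    Nat.factorial_succ (r + 2 * s + 2), oddDoubleFactorial_succ (r + s + 1)]
  push_cast
  field_simp
  ring

/-- The three-term recurrence solved for `X * L_q`. For `q = 0` the last term has coefficient `0`,
so the truncated index `q - 1` is harmless. -/
lemma X_mul_legendre (q : ℕ) :
    X * legendre q = C (((q : ℝ) + 1) / (2 * q + 1)) * legendre (q + 1)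
      + C ((q : ℝ) / (2 * q + 1)) * legendre (q - 1) := by
  cases q with
  | zero => simp [legendre]
  | succ k =>
    have e1 : (((k + 1 : ℕ) : ℝ) + 1) / (2 * (k + 1 : ℕ) + 1) * ((2 * k + 3) / (k + 2)) = 1 := by
      push_cast; field_simp; ring
    have e2 : (((k + 1 : ℕ) : ℝ) + 1) / (2 * (k + 1 : ℕ) + 1) * ((k + 1) / (k + 2))
        = ((k + 1 : ℕ) : ℝ) / (2 * (k + 1 : ℕ) + 1) := by
      push_cast; field_simp; ring
    rw [show legendre (k + 1 + 1) = C ((2 * (k : ℝ) + 3) / ((k : ℝ) + 2)) * (X * legendre (k + 1))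
        - C (((k : ℝ) + 1) / ((k : ℝ) + 2)) * legendre k by rw [legendre], mul_sub, ← mul_assoc,
      ← mul_assoc (C _) (C _) (legendre k), ← C_mul, ← C_mul, e1, e2]
    simp

/-- Multiplying the first `k + 1` terms of the expansion of `X ^ m` by `X` gives the first `k + 1`
terms of the expansion of `X ^ (m + 1)` plus one leftover multiple of `L_{m-2k-1}`. -/
lemma X_mul_partial_sum (k r : ℕ) :
    X * ∑ s ∈ Finset.range (k + 1),
        C (betaCoeff (2 * k + r - 2 * s) s) * legendre (2 * k + r - 2 * s)
      = ∑ s ∈ Finset.range (k + 1),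
          C (betaCoeff (2 * k + r + 1 - 2 * s) s) * legendre (2 * k + r + 1 - 2 * s)
        + C (betaCoeff r k * ((r : ℝ) / (2 * r + 1))) * legendre (r - 1) := by
  induction k generalizing r with
  | zero =>
    simp only [zero_add, Finset.sum_range_one, mul_zero, Nat.sub_zero, zero_add]
    rw [mul_left_comm, X_mul_legendre, betaCoeff_succ_zero, C_mul, C_mul]
    ring
  | succ k ih =>
    rw [Finset.sum_range_succ, Finset.sum_range_succ _ (k + 1), mul_add,
      show 2 * (k + 1) + r = 2 * k + (r + 2) by ring, ih (r + 2),
      show 2 * k + (r + 2) - 2 * (k + 1) = r by omega,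
      show 2 * k + (r + 2) + 1 - 2 * (k + 1) = r + 1 by omega,
      show r + 2 - 1 = r + 1 by omega,
      mul_left_comm X, X_mul_legendre, betaCoeff_succ_succ,
      show 2 * ((r + 2 : ℕ) : ℝ) + 1 = 2 * r + 5 by push_cast; ring]
    push_cast
    simp only [C_mul, C_add]
    ring

/-- The Legendre expansion of the monomial:
`x^m = ∑_{s=0}^{⌊m/2⌋} β_{m-2s,s} L_{m-2s}(x)`. -/
theorem monomial_legendre_expansion (m : ℕ) :
    (Polynomial.X : Polynomial ℝ) ^ m
      = ∑ s ∈ Finset.range (m / 2 + 1),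
          Polynomial.C (betaCoeff (m - 2 * s) s) * legendre (m - 2 * s) := by
  induction m with
  | zero => simp [betaCoeff_zero_zero, legendre]
  | succ m ih =>
    rw [pow_succ', ih]
    have key := X_mul_partial_sum (m / 2) (m % 2)
    rw [Nat.div_add_mod] at key
    rw [key]
    rcases Nat.mod_two_eq_zero_or_one m with h | h
    · rw [h, show (m + 1) / 2 = m / 2 by omega]
      simp
    · rw [h, show (m + 1) / 2 = m / 2 + 1 by omega, Finset.sum_range_succ _ (m / 2 + 1),
        show m + 1 - 2 * (m / 2 + 1) = 0 by omega, betaCoeff_zero_succ]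
      norm_num
end

section
/- Let Ω_1,…,Ω_N ∈ ℝ^d be constant vectors, and suppose ψ_1,…,ψ_N and φ_1,…,φ_N : ℝ^d × [0,T] → ℝ are smooth functions, periodic in the spatial variable, satisfying for each j the forward discrete-ordinates system ∂_t ψ_j + Ω_j·∇_x ψ_j = σ(ψ̄ − ψ_j) and the dual system ∂_t φ_j + Ω_j·∇_x φ_j + σ(φ̄ − φ_j) = 0, where ψ̄ = (1/W)∑_j ω_j ψ_j and φ̄ = (1/W)∑_j ω_j φ_j. Then the weighted pairing t ↦ ∑_{j=1}^N ω_j ∫_{[0,1]^d} ψ_j(x,t) φ_j(x,t) dx is constant on [0,T]. -/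
/-!
Write `G_j = ψ_j φ_j`. The product rule and the two systems give
`∂_t G_j + Ω_j·∇G_j = σ (ψ̄ φ_j − ψ_j φ̄)`: the terms `∓σ ψ_j φ_j` cancel. The transport term
integrates to zero over the unit cell by the divergence theorem, since opposite faces contribute
equally for a periodic function (`integral_fderiv_eq_zero_of_periodic`). The weighted sum of the
right-hand sides vanishes pointwise, because
`∑_j ω_j ψ̄ φ_j = W ψ̄ φ̄ = ∑_j ω_j ψ_j φ̄`. Differentiating under the integral sign
(`hasDerivAt_integral_cube`), the pairing thus has derivative zero at every `t ∈ [0,T]`.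
-/

open MeasureTheory Set

/-- The integral of a directional derivative of a periodic `C¹` function over the unit cell
vanishes: it is the divergence of `g • v`, whose fluxes through opposite faces cancel. -/
lemma integral_fderiv_eq_zero_of_periodic {n : ℕ} (g : (Fin (n + 1) → ℝ) → ℝ)
    (hg : ContDiff ℝ 1 g) (hper : ∀ x i, g (x + Pi.single i 1) = g x) (v : Fin (n + 1) → ℝ) :
    ∫ x in Icc (0 : Fin (n + 1) → ℝ) 1, fderiv ℝ g x v = 0 := by
  have hsum : ∀ x, ∑ i, (v i • fderiv ℝ g x) (Pi.single i 1) = fderiv ℝ g x v := by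
    intro x
    conv_rhs => rw [pi_eq_sum_univ' v]
    rw [map_sum]
    refine Finset.sum_congr rfl fun i _ => ?_
    rw [smul_apply, map_smul]
  have hcont : Continuous fun x => fderiv ℝ g x v :=
    (hg.continuous_fderiv (by norm_num)).clm_apply continuous_const
  have key := integral_divergence_of_hasFDerivAt_off_countable' (0 : Fin (n + 1) → ℝ) 1
    zero_le_one (fun i x => v i • g x) (fun i x => v i • fderiv ℝ g x) ∅ countable_empty
    (fun i => (hg.continuous.const_smul (v i)).continuousOn)
    (fun x _ i => ((hg.differentiable (by norm_num) x).hasFDerivAt).const_smul (v i))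
    (by simp only [hsum]; exact hcont.continuousOn.integrableOn_compact isCompact_Icc)
  simp only [hsum] at key
  rw [key]
  refine Finset.sum_eq_zero fun i _ => sub_eq_zero.2 ?_
  congr 1
  ext y
  -- The front face is the back face translated by the `i`-th unit vector.
  have : i.insertNth (1 : ℝ) y = (i.insertNth (0 : ℝ) y : Fin (n + 1) → ℝ) + Pi.single i 1 := by
    ext k
    refine Fin.succAboveCases i ?_ (fun m => ?_) k <;> simp
  simp only [Pi.one_apply, Pi.zero_apply]
  rw [this, hper]

/-- Differentiation under the integral sign over the unit cell; the dominating constant is a bound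
for the time derivative on the compact set `[0,1]^d × [t-1,t+1]`. -/
lemma hasDerivAt_integral_cube {d : ℕ} (G : (Fin d → ℝ) × ℝ → ℝ) (hG : ContDiff ℝ 1 G) (t : ℝ) :
    HasDerivAt (fun s => ∫ x in Icc (0 : Fin d → ℝ) 1, G (x, s))
      (∫ x in Icc (0 : Fin d → ℝ) 1, fderiv ℝ G (x, t) (0, 1)) t := by
  have hcont : Continuous fun p => fderiv ℝ G p (0, 1) :=
    (hG.continuous_fderiv (by norm_num)).clm_apply continuous_const
  obtain ⟨C, hC⟩ := ((isCompact_Icc (a := (0 : Fin d → ℝ)) (b := 1)).prod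
    (isCompact_Icc (a := t - 1) (b := t + 1))).exists_bound_of_continuousOn hcont.continuousOn
  have hGs : ∀ s, Continuous fun x => G (x, s) := fun s => hG.continuous.comp (by fun_prop)
  refine (hasDerivAt_integral_of_dominated_loc_of_deriv_le (bound := fun _ => C)
    (F := fun s x => G (x, s)) (F' := fun s x => fderiv ℝ G (x, s) (0, 1))
    (Icc_mem_nhds (by linarith : t - 1 < t) (by linarith : t < t + 1)) ?_ ?_ ?_ ?_ ?_ ?_).2
  · exact Filter.Eventually.of_forall fun s => (hGs s).aestronglyMeasurable
  · exact (hGs t).continuousOn.integrableOn_compact isCompact_Icc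
  · exact (hcont.comp (by fun_prop : Continuous fun x : Fin d → ℝ => (x, t))).aestronglyMeasurable
  · filter_upwards [ae_restrict_mem measurableSet_Icc] with x hx s hs using hC (x, s) ⟨hx, hs⟩
  · exact continuous_const.continuousOn.integrableOn_compact isCompact_Icc
  · refine Filter.Eventually.of_forall fun x s _ => ?_
    exact ((hG.differentiable (by norm_num) (x, s)).hasFDerivAt).comp_hasDerivAt s
      ((hasDerivAt_const s x).prodMk (hasDerivAt_id s))

lemma fderiv_apply_zero_one {d : ℕ} (f : (Fin d → ℝ) → ℝ → ℝ)
    (hf : ContDiff ℝ 1 fun p : (Fin d → ℝ) × ℝ => f p.1 p.2) (x : Fin d → ℝ) (t : ℝ) :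
    fderiv ℝ (fun p : (Fin d → ℝ) × ℝ => f p.1 p.2) (x, t) (0, 1) = deriv (fun s => f x s) t :=
  (((hf.differentiable (by norm_num) (x, t)).hasFDerivAt).comp_hasDerivAt t
    ((hasDerivAt_const t x).prodMk (hasDerivAt_id t))).deriv.symm

/-- Leibniz rule for the transport operator `∂_t + v·∇`: if it maps `f` to `a` and `g` to `b` at
`(x, t)`, it maps `f g` to `a g + f b`. The conclusion is solved for the time derivative. -/
lemma transport_mul {d : ℕ} (f g : (Fin d → ℝ) → ℝ → ℝ)
    (hf : ContDiff ℝ 1 fun p : (Fin d → ℝ) × ℝ => f p.1 p.2)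
    (hg : ContDiff ℝ 1 fun p : (Fin d → ℝ) × ℝ => g p.1 p.2)
    (v x : Fin d → ℝ) (t a b : ℝ)
    (ha : deriv (fun s => f x s) t + fderiv ℝ (fun y => f y t) x v = a)
    (hb : deriv (fun s => g x s) t + fderiv ℝ (fun y => g y t) x v = b) :
    fderiv ℝ (fun p : (Fin d → ℝ) × ℝ => f p.1 p.2 * g p.1 p.2) (x, t) (0, 1)
      = a * g x t + f x t * b - fderiv ℝ (fun y => f y t * g y t) x v := by
  have slice : ∀ h : (Fin d → ℝ) → ℝ → ℝ,
      ContDiff ℝ 1 (fun p : (Fin d → ℝ) × ℝ => h p.1 p.2) →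
      DifferentiableAt ℝ (fun y => h y t) x := fun h hh =>
    ((hh.comp (contDiff_prodMk_left t)).differentiable (by norm_num)) x
  rw [fderiv_fun_mul (hf.differentiable (by norm_num) _) (hg.differentiable (by norm_num) _),
    fderiv_fun_mul (slice f hf) (slice g hg)]
  simp only [add_apply, smul_apply, smul_eq_mul,
    fderiv_apply_zero_one f hf, fderiv_apply_zero_one g hg]
  rw [← ha, ← hb]
  ring

/-- For the discrete-ordinates system `∂_t ψ_j + Ω_j·∇_x ψ_j = σ(ψ̄ − ψ_j)` and the dual
system `∂_t φ_j + Ω_j·∇_x φ_j + σ(φ̄ − φ_j) = 0`, with smooth spatially periodic solutions,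
the weighted pairing `t ↦ ∑_j ω_j ∫_{[0,1]^d} ψ_j φ_j dx` is constant on `[0,T]`. -/
theorem weighted_pairing_constant
    (d N : ℕ) (hd : 1 ≤ d) (hN : 1 ≤ N)
    (ω : Fin N → ℝ) (hω : ∀ j, 0 < ω j)
    (σ : ℝ) (hσ : 0 ≤ σ)
    (T : ℝ) (hT : 0 < T)
    (Ω : Fin N → (Fin d → ℝ))
    (ψ φ : Fin N → (Fin d → ℝ) → ℝ → ℝ)
    (hψ_smooth : ∀ j, ContDiff ℝ (⊤ : ℕ∞) (fun p : (Fin d → ℝ) × ℝ => ψ j p.1 p.2))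
    (hφ_smooth : ∀ j, ContDiff ℝ (⊤ : ℕ∞) (fun p : (Fin d → ℝ) × ℝ => φ j p.1 p.2))
    (hψ_per : ∀ j (x : Fin d → ℝ) (t : ℝ) (i : Fin d),
      ψ j (x + Pi.single i 1) t = ψ j x t)
    (hφ_per : ∀ j (x : Fin d → ℝ) (t : ℝ) (i : Fin d),
      φ j (x + Pi.single i 1) t = φ j x t)
    (hψ_eq : ∀ j (x : Fin d → ℝ) (t : ℝ), t ∈ Set.Icc 0 T →
      deriv (fun s => ψ j x s) t + fderiv ℝ (fun y => ψ j y t) x (Ω j)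
        = σ * ((∑ l, ω l * ψ l x t) / (∑ l, ω l) - ψ j x t))
    (hφ_eq : ∀ j (x : Fin d → ℝ) (t : ℝ), t ∈ Set.Icc 0 T →
      deriv (fun s => φ j x s) t + fderiv ℝ (fun y => φ j y t) x (Ω j)
        + σ * ((∑ l, ω l * φ l x t) / (∑ l, ω l) - φ j x t) = 0) :
    ∀ t ∈ Set.Icc 0 T,
      ∑ j, ω j * ∫ x in Set.Icc (0 : Fin d → ℝ) 1, ψ j x t * φ j x t
        = ∑ j, ω j * ∫ x in Set.Icc (0 : Fin d → ℝ) 1, ψ j x 0 * φ j x 0 := by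
  obtain ⟨n, rfl⟩ : ∃ n, d = n + 1 := ⟨d - 1, by omega⟩
  have hψ1 : ∀ j, ContDiff ℝ 1 (fun p : (Fin (n + 1) → ℝ) × ℝ => ψ j p.1 p.2) :=
    fun j => (hψ_smooth j).of_le (by exact_mod_cast le_top)
  have hφ1 : ∀ j, ContDiff ℝ 1 (fun p : (Fin (n + 1) → ℝ) × ℝ => φ j p.1 p.2) :=
    fun j => (hφ_smooth j).of_le (by exact_mod_cast le_top)
  have hder : ∀ t, HasDerivAt
      (fun s => ∑ j, ω j * ∫ x in Icc (0 : Fin (n + 1) → ℝ) 1, ψ j x s * φ j x s)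
      (∑ j, ω j * ∫ x in Icc (0 : Fin (n + 1) → ℝ) 1,
        fderiv ℝ (fun p : (Fin (n + 1) → ℝ) × ℝ => ψ j p.1 p.2 * φ j p.1 p.2) (x, t) (0, 1)) t :=
    fun t => HasDerivAt.fun_sum fun j _ =>
      (hasDerivAt_integral_cube _ ((hψ1 j).mul (hφ1 j)) t).const_mul (ω j)
  refine constant_of_has_deriv_right_zero
    (fun t _ => (hder t).continuousAt.continuousWithinAt) fun t ht => ?_
  have htI : t ∈ Icc 0 T := ⟨ht.1, ht.2.le⟩
  refine HasDerivAt.hasDerivWithinAt ?_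
  convert! hder t using 1
  have hψc : ∀ j, Continuous fun x => ψ j x t := fun j =>
    (hψ1 j).continuous.comp (by fun_prop : Continuous fun x : Fin (n + 1) → ℝ => (x, t))
  have hφc : ∀ j, Continuous fun x => φ j x t := fun j =>
    (hφ1 j).continuous.comp (by fun_prop : Continuous fun x : Fin (n + 1) → ℝ => (x, t))
  -- After integration, only the collision part of the balance law for `ψ_j φ_j` survives.
  have hint : ∀ j, ∫ x in Icc (0 : Fin (n + 1) → ℝ) 1,
        fderiv ℝ (fun p : (Fin (n + 1) → ℝ) × ℝ => ψ j p.1 p.2 * φ j p.1 p.2) (x, t) (0, 1)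
      = ∫ x in Icc (0 : Fin (n + 1) → ℝ) 1, σ * ((∑ l, ω l * ψ l x t) / (∑ l, ω l) * φ j x t
          - ψ j x t * ((∑ l, ω l * φ l x t) / (∑ l, ω l))) := by
    intro j
    have hslice : ContDiff ℝ 1 fun x => ψ j x t * φ j x t :=
      ((hψ1 j).mul (hφ1 j)).comp (contDiff_prodMk_left t)
    have hzero := integral_fderiv_eq_zero_of_periodic (fun x => ψ j x t * φ j x t) hslice
      (fun x i => by rw [hψ_per, hφ_per]) (Ω j)
    rw [← sub_zero (∫ x in Icc (0 : Fin (n + 1) → ℝ) 1, σ * _), ← hzero, ← integral_sub]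
    · congr 1
      ext x
      rw [transport_mul (ψ j) (φ j) (hψ1 j) (hφ1 j) (Ω j) x t _ _ (hψ_eq j x t htI)
        (eq_neg_of_add_eq_zero_left (hφ_eq j x t htI))]
      ring
    · exact Continuous.integrableOn_Icc (by fun_prop)
    · exact (((hslice.continuous_fderiv (by norm_num)).clm_apply
        continuous_const).continuousOn).integrableOn_compact isCompact_Icc
  simp only [hint, ← integral_const_mul]
  rw [← integral_finsetSum]
  · symm
    refine integral_eq_zero_of_ae (Filter.Eventually.of_forall fun x => ?_)
    -- Both halves of the weighted collision sum equal `σ W ψ̄ φ̄`.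
    have hsplit : ∀ j, ω j * (σ * ((∑ l, ω l * ψ l x t) / (∑ l, ω l) * φ j x t
          - ψ j x t * ((∑ l, ω l * φ l x t) / (∑ l, ω l))))
        = σ * ((∑ l, ω l * ψ l x t) / (∑ l, ω l)) * (ω j * φ j x t)
          - σ * ((∑ l, ω l * φ l x t) / (∑ l, ω l)) * (ω j * ψ j x t) := fun j => by ring
    simp only [hsplit, Finset.sum_sub_distrib, ← Finset.mul_sum, Pi.zero_apply]
    ring
  · intro j _
    refine Continuous.integrableOn_Icc ?_
    fun_prop
end

section
/- Let A_1,…,A_N : ℝ^d → ℝ^d be smooth periodic divergence-free vector fields (∇·A_j = 0), and suppose φ_1,…,φ_N : ℝ^d × [0,T] → ℝ are smooth functions, periodic in the spatial variable, satisfying ∂_t φ_j + A_j(x)·∇_x φ_j + σ(φ̄ − φ_j) = 0 for each j, where φ̄ = (1/W)∑_j ω_j φ_j. Then for every t ∈ [0,T], d/dt [ (1/2) ∑_{j=1}^N ω_j ∫_{[0,1]^d} φ_j(x,t)² dx ] = σ ∑_{j=1}^N ω_j ∫_{[0,1]^d} (φ̄(x,t) − φ_j(x,t))² dx ≥ 0;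 in particular, ∑_j ω_j ‖φ_j(·,t)‖²_{L²([0,1]^d)} ≤ ∑_j ω_j ‖φ_j(·,T)‖²_{L²([0,1]^d)} for all 0 ≤ t ≤ T. -/
/-!
Multiplying the equation for `φ_j` by `φ_j` and integrating over the cell expresses
`½ d/dt ∫ φ_j²` as minus the transport term `∫ φ_j A_j·∇φ_j` minus `σ ∫ φ_j (φ̄ − φ_j)`.

* Differentiation under the integral sign is justified by compactness of the cell
  (`hasDerivAt_integral_sq`).
* Since `A_j` is divergence free, `2 φ_j A_j·∇φ_j = ∇·(φ_j² A_j)`, and the divergence theorem on the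
  cell gives zero because contributions of opposite faces cancel by periodicity
  (`integral_divergence_eq_zero`, `integral_transport_eq_zero`).
* Since `∑_j ω_j (φ̄ − φ_j) = 0`, one has `-∑_j ω_j φ_j (φ̄ − φ_j) = ∑_j ω_j (φ̄ − φ_j)²`
  (`weighted_variance`).

The monotonicity of the energy on `[0, T]` follows from the nonnegativity of its derivative.
-/

open MeasureTheory

/-- The divergence of a `C¹` periodic vector field has zero integral over the unit cell: the
boundary terms on opposite faces agree. -/
theorem integral_divergence_eq_zero {d : ℕ} (hd : 1 ≤ d) (F : Fin d → (Fin d → ℝ) → ℝ)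
    (hF : ∀ i, ContDiff ℝ 1 (F i))
    (hper : ∀ i x, F i (x + Pi.single i 1) = F i x) :
    ∫ x in Set.Icc (0 : Fin d → ℝ) 1, ∑ i, fderiv ℝ (F i) x (Pi.single i 1) = 0 := by
  obtain ⟨n, rfl⟩ : ∃ n, d = n + 1 := ⟨d - 1, by omega⟩
  have hcont : Continuous fun x => ∑ i, fderiv ℝ (F i) x (Pi.single i 1) :=
    continuous_finsetSum _ fun i _ =>
      ((hF i).continuous_fderiv one_ne_zero).clm_apply continuous_const
  rw [integral_divergence_of_hasFDerivAt_off_countable' (0 : Fin (n + 1) → ℝ) 1 zero_le_one F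
    (fun i => fderiv ℝ (F i)) ∅ Set.countable_empty (fun i => (hF i).continuous.continuousOn)
    (fun x _ i => ((hF i).differentiable one_ne_zero x).hasFDerivAt)
    (hcont.continuousOn.integrableOn_compact isCompact_Icc)]
  refine Finset.sum_eq_zero fun i _ => sub_eq_zero.2 ?_
  congr 1
  funext y
  refine Eq.trans ?_ (hper i _)
  congr 1
  funext k
  refine Fin.succAboveCases i ?_ (fun k => ?_) k <;> simp

/-- Transport by a periodic divergence-free field conserves the `L²` norm: the integrand is half
the divergence of `u² A`. -/
theorem integral_transport_eq_zero {d : ℕ} (hd : 1 ≤ d) (A : (Fin d → ℝ) → (Fin d → ℝ))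
    (hA : ContDiff ℝ 1 A) (hA_per : ∀ x (i : Fin d), A (x + Pi.single i 1) = A x)
    (hA_div : ∀ x, ∑ i, fderiv ℝ (fun y => A y i) x (Pi.single i 1) = 0)
    (u : (Fin d → ℝ) → ℝ) (hu : ContDiff ℝ 1 u)
    (hu_per : ∀ x (i : Fin d), u (x + Pi.single i 1) = u x) :
    ∫ x in Set.Icc (0 : Fin d → ℝ) 1, u x * fderiv ℝ u x (A x) = 0 := by
  have hAi : ∀ i, ContDiff ℝ 1 fun y => A y i := fun i => contDiff_pi.1 hA i
  have h := integral_divergence_eq_zero hd (fun i x => A x i * u x ^ 2)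
    (fun i => (hAi i).mul (hu.pow 2)) (fun i x => by simp only [hA_per, hu_per])
  have key : ∀ x, ∑ i, fderiv ℝ (fun y => A y i * u y ^ 2) x (Pi.single i 1)
      = 2 * (u x * fderiv ℝ u x (A x)) := by
    intro x
    have hterm : ∀ i, fderiv ℝ (fun y => A y i * u y ^ 2) x (Pi.single i 1)
        = 2 * u x * (A x i * fderiv ℝ u x (Pi.single i 1))
          + u x ^ 2 * fderiv ℝ (fun y => A y i) x (Pi.single i 1) := by
      intro i
      have hd1 := ((hAi i).differentiable one_ne_zero x).hasFDerivAt
      have hd2 := (hu.differentiable one_ne_zero x).hasFDerivAt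
      rw [(hd1.fun_mul (hd2.pow 2)).fderiv]
      simp
      ring
    have hdir : fderiv ℝ u x (A x) = ∑ i, A x i * fderiv ℝ u x (Pi.single i 1) := by
      conv_lhs => rw [pi_eq_sum_univ' (A x)]
      simp [map_sum]
    rw [Finset.sum_congr rfl fun i _ => hterm i, Finset.sum_add_distrib, ← Finset.mul_sum,
      ← Finset.mul_sum, hA_div, hdir]
    ring
  simp only [key] at h
  rw [integral_const_mul] at h
  linarith

theorem hasDerivAt_integral_sq {d : ℕ} (u : (Fin d → ℝ) → ℝ → ℝ)
    (hu : ContDiff ℝ 1 (fun p : (Fin d → ℝ) × ℝ => u p.1 p.2)) (t : ℝ) :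
    HasDerivAt (fun s => ∫ x in Set.Icc (0 : Fin d → ℝ) 1, u x s ^ 2)
      (∫ x in Set.Icc (0 : Fin d → ℝ) 1, 2 * (u x t * deriv (fun s => u x s) t)) t := by
  have hslice : ∀ x s, HasDerivAt (fun s => u x s)
      (fderiv ℝ (fun p : (Fin d → ℝ) × ℝ => u p.1 p.2) (x, s) (0, 1)) s := fun x s =>
    ((hu.differentiable one_ne_zero (x, s)).hasFDerivAt).comp_hasDerivAt s
      ((hasDerivAt_const s x).prodMk (hasDerivAt_id s))
  have hcu : Continuous fun p : (Fin d → ℝ) × ℝ => u p.1 p.2 := hu.continuous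
  have hcd : Continuous fun p : (Fin d → ℝ) × ℝ =>
      2 * (u p.1 p.2 * deriv (fun s => u p.1 s) p.2) := by
    have : (fun p : (Fin d → ℝ) × ℝ => deriv (fun s => u p.1 s) p.2)
        = fun p => fderiv ℝ (fun p : (Fin d → ℝ) × ℝ => u p.1 p.2) p (0, 1) := by
      funext p
      exact (hslice p.1 p.2).deriv
    have hc : Continuous fun p : (Fin d → ℝ) × ℝ => deriv (fun s => u p.1 s) p.2 := by
      rw [this]
      exact (hu.continuous_fderiv one_ne_zero).clm_apply continuous_const
    exact continuous_const.mul (hcu.mul hc)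
  have hcu_t : ∀ s, Continuous fun x => u x s ^ 2 := fun s =>
    (hcu.comp (continuous_id.prodMk continuous_const)).pow 2
  -- A uniform bound for the integrand's time derivative near `t`, by compactness.
  obtain ⟨C, hC⟩ := ((isCompact_Icc (a := (0 : Fin d → ℝ)) (b := 1)).prod
    (isCompact_closedBall t 1)).exists_bound_of_continuousOn hcd.continuousOn
  refine (hasDerivAt_integral_of_dominated_loc_of_deriv_le
    (F := fun s x => u x s ^ 2) (F' := fun s x => 2 * (u x s * deriv (fun s => u x s) s))
    (bound := fun _ => C) (Metric.closedBall_mem_nhds t one_pos) ?_ ?_ ?_ ?_ ?_ ?_).2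
  · exact Filter.Eventually.of_forall fun s => (hcu_t s).aestronglyMeasurable
  · exact (hcu_t t).continuousOn.integrableOn_compact isCompact_Icc
  · exact (hcd.comp (continuous_id.prodMk continuous_const)).aestronglyMeasurable
  · filter_upwards [ae_restrict_mem measurableSet_Icc] with x hx s hs
    exact hC (x, s) ⟨hx, hs⟩
  · exact continuousOn_const.integrableOn_compact isCompact_Icc
  · refine Filter.Eventually.of_forall fun x s _ => ?_
    have := (hslice x s).differentiableAt.hasDerivAt.pow 2
    refine this.congr_deriv ?_
    simp
    ring

/-- Pointwise algebra: deviations from the weighted mean are orthogonal to the mean, so pairing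
them with `f` yields minus the weighted variance. -/
theorem weighted_variance {N : ℕ} (ω f : Fin N → ℝ) (hW : ∑ l, ω l ≠ 0) :
    ∑ j, ω j * (f j * ((∑ l, ω l * f l) / (∑ l, ω l) - f j))
      = -∑ j, ω j * ((∑ l, ω l * f l) / (∑ l, ω l) - f j) ^ 2 := by
  set m := (∑ l, ω l * f l) / (∑ l, ω l) with hm
  have hzero : ∑ j, ω j * (m - f j) = 0 := by
    simp only [mul_sub, Finset.sum_sub_distrib, ← Finset.sum_mul]
    rw [hm, mul_div_cancel₀ _ hW, sub_self]
  have : ∑ j, (ω j * (f j * (m - f j)) + ω j * (m - f j) ^ 2) = m * ∑ j, ω j * (m - f j) := by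
    rw [Finset.mul_sum]
    exact Finset.sum_congr rfl fun j _ => by ring
  rw [Finset.sum_add_distrib, hzero, mul_zero] at this
  linarith

/-- For the dual system `∂_t φ_j + A_j(x)·∇_x φ_j + σ(φ̄ − φ_j) = 0` with smooth periodic
divergence-free fields `A_j`, the weighted `L²` energy satisfies
`d/dt [(1/2) ∑_j ω_j ∫ φ_j²] = σ ∑_j ω_j ∫ (φ̄ − φ_j)² ≥ 0`; in particular it is
nondecreasing: `∑_j ω_j ‖φ_j(·,t)‖² ≤ ∑_j ω_j ‖φ_j(·,T)‖²` for `0 ≤ t ≤ T`. -/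
theorem dual_energy_identity
    (d N : ℕ) (hd : 1 ≤ d) (hN : 1 ≤ N)
    (ω : Fin N → ℝ) (hω : ∀ j, 0 < ω j)
    (σ : ℝ) (hσ : 0 ≤ σ)
    (T : ℝ) (hT : 0 < T)
    (A : Fin N → (Fin d → ℝ) → (Fin d → ℝ))
    (hA_smooth : ∀ j, ContDiff ℝ (⊤ : ℕ∞) (A j))
    (hA_per : ∀ j (x : Fin d → ℝ) (i : Fin d), A j (x + Pi.single i 1) = A j x)
    (hA_div : ∀ j (x : Fin d → ℝ),
      ∑ i, fderiv ℝ (fun y => A j y i) x (Pi.single i 1) = 0)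
    (φ : Fin N → (Fin d → ℝ) → ℝ → ℝ)
    (hφ_smooth : ∀ j, ContDiff ℝ (⊤ : ℕ∞) (fun p : (Fin d → ℝ) × ℝ => φ j p.1 p.2))
    (hφ_per : ∀ j (x : Fin d → ℝ) (t : ℝ) (i : Fin d),
      φ j (x + Pi.single i 1) t = φ j x t)
    (hφ_eq : ∀ j (x : Fin d → ℝ) (t : ℝ), t ∈ Set.Icc 0 T →
      deriv (fun s => φ j x s) t + fderiv ℝ (fun y => φ j y t) x (A j x)
        + σ * ((∑ l, ω l * φ l x t) / (∑ l, ω l) - φ j x t) = 0) :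
    (∀ t ∈ Set.Icc 0 T,
      HasDerivAt
        (fun s => (1 / 2) * ∑ j, ω j * ∫ x in Set.Icc (0 : Fin d → ℝ) 1, (φ j x s) ^ 2)
        (σ * ∑ j, ω j * ∫ x in Set.Icc (0 : Fin d → ℝ) 1,
          ((∑ l, ω l * φ l x t) / (∑ l, ω l) - φ j x t) ^ 2) t
      ∧ 0 ≤ σ * ∑ j, ω j * ∫ x in Set.Icc (0 : Fin d → ℝ) 1,
          ((∑ l, ω l * φ l x t) / (∑ l, ω l) - φ j x t) ^ 2) ∧
    (∀ t ∈ Set.Icc 0 T,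
      ∑ j, ω j * ∫ x in Set.Icc (0 : Fin d → ℝ) 1, (φ j x t) ^ 2
        ≤ ∑ j, ω j * ∫ x in Set.Icc (0 : Fin d → ℝ) 1, (φ j x T) ^ 2) := by
  have hW : ∑ l, ω l ≠ 0 :=
    (Finset.sum_pos (fun l _ => hω l) ⟨⟨0, hN⟩, Finset.mem_univ _⟩).ne'
  have hφ1 : ∀ j, ContDiff ℝ 1 (fun p : (Fin d → ℝ) × ℝ => φ j p.1 p.2) := fun j =>
    (hφ_smooth j).of_le (by exact_mod_cast le_top)
  have hA1 : ∀ j, ContDiff ℝ 1 (A j) := fun j => (hA_smooth j).of_le (by exact_mod_cast le_top)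
  have hx1 : ∀ j t, ContDiff ℝ 1 (fun x => φ j x t) := fun j t =>
    (hφ1 j).comp (contDiff_id.prodMk contDiff_const)
  have hcm : ∀ j t, Continuous fun x => (∑ l, ω l * φ l x t) / (∑ l, ω l) - φ j x t := fun j t =>
    ((continuous_finsetSum _ fun l _ => continuous_const.mul (hx1 l t).continuous).div_const _).sub
      (hx1 j t).continuous
  have hint : ∀ {g : (Fin d → ℝ) → ℝ}, Continuous g →
      Integrable g (volume.restrict (Set.Icc (0 : Fin d → ℝ) 1)) := fun hg =>
    hg.continuousOn.integrableOn_compact isCompact_Icc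
  have hnonneg : ∀ t, 0 ≤ σ * ∑ j, ω j * ∫ x in Set.Icc (0 : Fin d → ℝ) 1,
      ((∑ l, ω l * φ l x t) / (∑ l, ω l) - φ j x t) ^ 2 := fun t =>
    mul_nonneg hσ (Finset.sum_nonneg fun j _ =>
      mul_nonneg (hω j).le (integral_nonneg fun x => sq_nonneg _))
  have hderiv : ∀ t ∈ Set.Icc 0 T, HasDerivAt
      (fun s => (1 / 2) * ∑ j, ω j * ∫ x in Set.Icc (0 : Fin d → ℝ) 1, (φ j x s) ^ 2)
      (σ * ∑ j, ω j * ∫ x in Set.Icc (0 : Fin d → ℝ) 1,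
        ((∑ l, ω l * φ l x t) / (∑ l, ω l) - φ j x t) ^ 2) t := by
    intro t ht
    refine ((HasDerivAt.fun_sum fun j _ =>
      (hasDerivAt_integral_sq (φ j) (hφ1 j) t).const_mul (ω j)).const_mul (1 / 2)).congr_deriv ?_
    -- The equation and the vanishing of the transport term, for each `j`.
    have hterm : ∀ j, ∫ x in Set.Icc (0 : Fin d → ℝ) 1, 2 * (φ j x t * deriv (fun s => φ j x s) t)
        = -2 * σ * ∫ x in Set.Icc (0 : Fin d → ℝ) 1,
          φ j x t * ((∑ l, ω l * φ l x t) / (∑ l, ω l) - φ j x t) := by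
      intro j
      have hpt : ∀ x, 2 * (φ j x t * deriv (fun s => φ j x s) t)
          = -2 * (φ j x t * fderiv ℝ (fun y => φ j y t) x (A j x))
            + -2 * σ * (φ j x t * ((∑ l, ω l * φ l x t) / (∑ l, ω l) - φ j x t)) := by
        intro x
        linear_combination 2 * φ j x t * hφ_eq j x t ht
      simp only [hpt]
      rw [integral_add, integral_const_mul, integral_const_mul,
        integral_transport_eq_zero hd (A j) (hA1 j) (hA_per j) (hA_div j) (fun x => φ j x t)
          (hx1 j t) (fun x i => hφ_per j x t i), mul_zero, zero_add]
      · exact hint (continuous_const.mul ((hx1 j t).continuous.mul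
          (((hx1 j t).continuous_fderiv one_ne_zero).clm_apply (hA1 j).continuous)))
      · exact hint (continuous_const.mul ((hx1 j t).continuous.mul (hcm j t)))
    have hvar : ∑ j, ω j * ∫ x in Set.Icc (0 : Fin d → ℝ) 1,
          φ j x t * ((∑ l, ω l * φ l x t) / (∑ l, ω l) - φ j x t)
        = -∑ j, ω j * ∫ x in Set.Icc (0 : Fin d → ℝ) 1,
          ((∑ l, ω l * φ l x t) / (∑ l, ω l) - φ j x t) ^ 2 := by
      simp only [← integral_const_mul]
      rw [← integral_finsetSum, ← integral_finsetSum, ← integral_neg]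
      · congr 1
        funext x
        exact weighted_variance ω (fun j => φ j x t) hW
      · exact fun j _ => hint (continuous_const.mul ((hcm j t).pow 2))
      · exact fun j _ => hint (continuous_const.mul ((hx1 j t).continuous.mul (hcm j t)))
    simp only [hterm]
    rw [← neg_eq_iff_eq_neg] at hvar
    rw [← hvar, mul_neg, Finset.mul_sum, Finset.mul_sum, ← Finset.sum_neg_distrib]
    exact Finset.sum_congr rfl fun j _ => by ring
  refine ⟨fun t ht => ⟨hderiv t ht, hnonneg t⟩, fun t ht => ?_⟩
  have hmono := monotoneOn_of_deriv_nonneg (convex_Icc 0 T)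
    (fun s hs => (hderiv s hs).continuousAt.continuousWithinAt)
    (fun s hs => (hderiv s (interior_subset hs)).differentiableAt.differentiableWithinAt)
    (fun s hs => by rw [(hderiv s (interior_subset hs)).deriv]; exact hnonneg s)
  have h := hmono ht (Set.right_mem_Icc.2 hT.le) ht.2
  simp only at h
  linarith
end

section
/- Let Ω_1,…,Ω_N ∈ ℝ^d be constant vectors and ℓ ≥ 0 an integer, and suppose φ_1,…,φ_N : ℝ^d × [0,T] → ℝ are smooth functions, periodic in the spatial variable, satisfying the dual system ∂_t φ_j + Ω_j·∇_x φ_j + σ(φ̄ − φ_j) = 0 for each j, where φ̄ = (1/W)∑_j ω_j φ_j. Then the weighted H^ℓ energy is nondecreasing in time: for all 0 ≤ t ≤ T, ∑_{j=1}^N ω_j ∑_{|α|≤ℓ} ‖∂^α_x φ_j(·,t)‖²_{L²([0,1]^d)} ≤ ∑_{j=1}^N ω_j ∑_{|α|≤ℓ} ‖∂^α_x φ_j(·,T)‖²_{L²([0,1]^d)}, where the inner sum ranges over spatial multi-indices α of order at most ℓ. -/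
/-!
Each spatial partial derivative commutes with the constant-coefficient operator
`∂_t + Ω_j·∇` and with the averaging, so it maps periodic smooth solutions of the dual system
to periodic smooth solutions (`IsDualSol.partialDeriv`, hence `IsDualSol.multiDeriv`). It therefore
suffices to treat `ℓ = 0` (`IsDualSol.energy_le`) and to sum over the multi-indices.

For a solution `F`, differentiating the `L²` energy under the integral gives
`d/dt ∑ ω_j ∫ F_j² = - ∑ ω_j ∫ Ω_j·∇(F_j²) + 2σ ∫ (∑ ω_j F_j² - (∑ ω_j F_j)² / W)`.
The transport term vanishes by the divergence theorem and periodicity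
(`integral_fderiv_eq_zero`), and the scattering term is nonnegative by Cauchy–Schwarz.
-/

open MeasureTheory

/-- The partial derivative in the `i`-th coordinate direction. -/
noncomputable def partialDeriv {d : ℕ} (i : Fin d) (f : (Fin d → ℝ) → ℝ) :
    (Fin d → ℝ) → ℝ :=
  fun x => fderiv ℝ f x (Pi.single i 1)

/-- The iterated spatial partial derivative `∂^α` for a multi-index `α : Fin d → ℕ`. -/
noncomputable def multiDeriv {d : ℕ} (α : Fin d → ℕ) (f : (Fin d → ℝ) → ℝ) :
    (Fin d → ℝ) → ℝ :=
  (List.finRange d).foldr (fun i g => (partialDeriv i)^[α i] ∘ g) id f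


/-- Periodic smooth solutions of the dual system on `[0, T]`, written as functions of the
space-time point `p = (x, t)`; the transport operator `∂_t + Ω_j·∇_x` is the derivative in the
space-time direction `(Ω_j, 1)`. -/
structure IsDualSol {d N : ℕ} (ω : Fin N → ℝ) (σ T : ℝ) (Ω : Fin N → (Fin d → ℝ))
    (F : Fin N → (Fin d → ℝ) × ℝ → ℝ) : Prop where
  smooth : ∀ j, ContDiff ℝ (⊤ : ℕ∞) (F j)
  per : ∀ j p (i : Fin d), F j (p + (Pi.single i 1, 0)) = F j p
  eqn : ∀ j x t, t ∈ Set.Icc 0 T →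
    fderiv ℝ (F j) (x, t) (Ω j, 1)
      + σ * ((∑ l, ω l * F l (x, t)) / (∑ l, ω l) - F j (x, t)) = 0

lemma fderiv_space_slice {d : ℕ} {f : (Fin d → ℝ) × ℝ → ℝ} (hf : Differentiable ℝ f)
    (x v : Fin d → ℝ) (t : ℝ) :
    fderiv ℝ (fun y => f (y, t)) x v = fderiv ℝ f (x, t) (v, 0) := by
  have h := (hf (x, t)).hasFDerivAt.comp x
    ((hasFDerivAt_id (𝕜 := ℝ) x).prodMk (hasFDerivAt_const t x))
  have h' : fderiv ℝ (fun y => f (y, t)) x = _ := h.fderiv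
  rw [h']
  simp

lemma hasDerivAt_time_slice {d : ℕ} {f : (Fin d → ℝ) × ℝ → ℝ} (hf : Differentiable ℝ f)
    (x : Fin d → ℝ) (t : ℝ) :
    HasDerivAt (fun s => f (x, s)) (fderiv ℝ f (x, t) (0, 1)) t :=
  (hf (x, t)).hasFDerivAt.comp_hasDerivAt t
    ((hasDerivAt_const t x).prodMk (hasDerivAt_id t))

/-- A spatial partial derivative of a solution is a solution: differentiate the equation, which
holds for all `x`, and use the symmetry of second derivatives. -/
lemma IsDualSol.partialDeriv {d N : ℕ} {ω : Fin N → ℝ} {σ T : ℝ} {Ω : Fin N → (Fin d → ℝ)}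
    {F : Fin N → (Fin d → ℝ) × ℝ → ℝ} (h : IsDualSol ω σ T Ω F) (i : Fin d) :
    IsDualSol ω σ T Ω (fun j p => partialDeriv i (fun y => F j (y, p.2)) p.1) := by
  have hdiff : ∀ j, Differentiable ℝ (F j) := fun j => (h.smooth j).differentiable (by simp)
  have hsm : ∀ j, ContDiff ℝ (⊤ : ℕ∞) (fderiv ℝ (F j)) :=
    fun j => (h.smooth j).fderiv_right (by simp)
  have hdd : ∀ j, Differentiable ℝ (fderiv ℝ (F j)) := fun j => (hsm j).differentiable (by simp)
  have hG : (fun j p => _root_.partialDeriv i (fun y => F j (y, p.2)) p.1)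
      = fun j p => fderiv ℝ (F j) p (Pi.single i 1, 0) := by
    funext j p
    exact fderiv_space_slice (hdiff j) p.1 _ p.2
  rw [hG]
  refine ⟨fun j => (hsm j).clm_apply contDiff_const, fun j p k => ?_, fun j x t ht => ?_⟩
  · have hper : (fun q => F j (q + (Pi.single k 1, 0))) = F j := funext fun q => h.per j q k
    rw [← fderiv_comp_add_right, hper]
  · have hd2 : ∀ j (v w : (Fin d → ℝ) × ℝ) (p : (Fin d → ℝ) × ℝ),
        fderiv ℝ (fun q => fderiv ℝ (F j) q v) p w = fderiv ℝ (fderiv ℝ (F j)) p w v := by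
      intro j v w p
      rw [fderiv_clm_apply (hdd j p) (differentiableAt_const v)]
      simp
    have hsymm : fderiv ℝ (fderiv ℝ (F j)) (x, t) (Ω j, 1) (Pi.single i 1, 0)
        = fderiv ℝ (fderiv ℝ (F j)) (x, t) (Pi.single i 1, 0) (Ω j, 1) :=
      ((h.smooth j).contDiffAt.isSymmSndFDerivAt
        (by simpa using WithTop.coe_le_coe.2 (le_top : (2 : ℕ∞) ≤ ⊤))) _ _
    rw [hd2, hsymm]
    have hD : HasFDerivAt (fun q => fderiv ℝ (F j) q (Ω j, 1)
        + σ * ((∑ l, ω l * F l q) / (∑ l, ω l) - F j q))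
        (fderiv ℝ (fun q => fderiv ℝ (F j) q (Ω j, 1)) (x, t)
          + σ • ((∑ l, ω l)⁻¹ • (∑ l, ω l • fderiv ℝ (F l) (x, t)) - fderiv ℝ (F j) (x, t)))
        (x, t) := by
      refine HasFDerivAt.add ?_ (HasFDerivAt.const_mul (HasFDerivAt.sub ?_ ?_) σ)
      · exact ((hdd j).clm_apply (differentiable_const _) (x, t)).hasFDerivAt
      · simp only [div_eq_inv_mul]
        refine HasFDerivAt.const_mul (HasFDerivAt.fun_sum fun l _ => ?_) _
        exact (hdiff l _).hasFDerivAt.const_mul _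
      · exact (hdiff j _).hasFDerivAt
    have hz := fderiv_space_slice (x := x) (t := t) (v := Pi.single i 1)
      (f := fun q => fderiv ℝ (F j) q (Ω j, 1)
        + σ * ((∑ l, ω l * F l q) / (∑ l, ω l) - F j q)) (by
        have := fun j => hdiff j
        have := (hdd j).clm_apply (differentiable_const (Ω j, (1 : ℝ)))
        fun_prop)
    simp only [h.eqn j _ t ht] at hz
    rw [hD.fderiv] at hz
    simp only [fderiv_fun_const, Pi.zero_apply, _root_.zero_apply,
      _root_.add_apply, _root_.smul_apply, hd2,
      _root_.sub_apply, _root_.sum_apply, smul_eq_mul] at hz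
    rw [div_eq_inv_mul]
    exact hz.symm

lemma IsDualSol.multiDeriv {d N : ℕ} {ω : Fin N → ℝ} {σ T : ℝ} {Ω : Fin N → (Fin d → ℝ)}
    {F : Fin N → (Fin d → ℝ) × ℝ → ℝ} (h : IsDualSol ω σ T Ω F) (α : Fin d → ℕ) :
    IsDualSol ω σ T Ω (fun j p => multiDeriv α (fun y => F j (y, p.2)) p.1) := by
  unfold _root_.multiDeriv
  induction List.finRange d with
  | nil => exact h
  | cons i L ih =>
    simp only [List.foldr_cons, Function.comp_apply]
    induction α i with
    | zero => exact ih
    | succ n ihn =>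
      simp only [Function.iterate_succ_apply']
      exact ihn.partialDeriv i

/-- The integral over the unit cell of a directional derivative of a periodic function vanishes:
in the divergence theorem for the field `f • v`, opposite faces cancel. -/
lemma integral_fderiv_eq_zero {d : ℕ} (hd : 1 ≤ d) {f : (Fin d → ℝ) → ℝ} (hf : ContDiff ℝ 1 f)
    (hper : ∀ x (i : Fin d), f (x + Pi.single i 1) = f x) (v : Fin d → ℝ) :
    ∫ x in Set.Icc (0 : Fin d → ℝ) 1, fderiv ℝ f x v = 0 := by
  obtain ⟨n, rfl⟩ : ∃ n, d = n + 1 := ⟨d - 1, by omega⟩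
  have hsum : ∀ x, fderiv ℝ f x v = ∑ i, (v i • fderiv ℝ f x) (Pi.single i 1) := by
    intro x
    conv_lhs => rw [← Finset.univ_sum_single v]
    rw [map_sum]
    refine Finset.sum_congr rfl fun i _ => ?_
    rw [_root_.smul_apply, ← map_smul]
    congr 1
    rw [← Pi.single_smul]
    simp
  have hcont : Continuous (fderiv ℝ f) := hf.continuous_fderiv (by simp)
  have hcv : Continuous fun x => fderiv ℝ f x v := hcont.clm_apply continuous_const
  have key := integral_divergence_of_hasFDerivAt_off_countable' (0 : Fin (n + 1) → ℝ) 1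
    zero_le_one (fun i x => v i * f x) (fun i x => v i • fderiv ℝ f x) ∅ Set.countable_empty
    (fun i => (continuous_const.mul hf.continuous).continuousOn)
    (fun x _ i => ((hf.differentiable (by simp) x).hasFDerivAt).const_mul _)
    (by
      simp only [← hsum]
      exact hcv.continuousOn.integrableOn_compact isCompact_Icc)
  simp only [← hsum] at key
  rw [key]
  refine Finset.sum_eq_zero fun i _ => ?_
  rw [sub_eq_zero]
  congr 1
  funext y
  congr 1
  rw [← hper (i.insertNth ((0 : Fin (n + 1) → ℝ) i) y) i]
  congr 1
  funext k
  refine Fin.succAboveCases i ?_ (fun k => ?_) k <;> simp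

/-- Differentiation under the integral sign over the unit cell; the bounded neighbourhood
`[t - 1, t + 1]` provides a constant dominating function by compactness. -/
lemma hasDerivAt_cell_integral {d : ℕ} {f : (Fin d → ℝ) × ℝ → ℝ} (hf : ContDiff ℝ 1 f) (t : ℝ) :
    HasDerivAt (fun s => ∫ x in Set.Icc (0 : Fin d → ℝ) 1, f (x, s))
      (∫ x in Set.Icc (0 : Fin d → ℝ) 1, fderiv ℝ f (x, t) (0, 1)) t := by
  have hc : Continuous fun p => fderiv ℝ f p (0, 1) :=
    (hf.continuous_fderiv (by simp)).clm_apply continuous_const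
  obtain ⟨C, hC⟩ := ((isCompact_Icc (a := (0 : Fin d → ℝ)) (b := 1)).prod
    (isCompact_Icc (a := t - 1) (b := t + 1))).exists_bound_of_continuousOn hc.continuousOn
  have hslice : ∀ s, Continuous fun x : Fin d → ℝ => f (x, s) :=
    fun s => hf.continuous.comp (by fun_prop)
  have hslice' : Continuous fun x : Fin d → ℝ => fderiv ℝ f (x, t) (0, 1) :=
    hc.comp (f := fun x => (x, t)) (by fun_prop)
  refine (hasDerivAt_integral_of_dominated_loc_of_deriv_le (s := Set.Icc (t - 1) (t + 1))
    (F := fun s x => f (x, s)) (F' := fun s x => fderiv ℝ f (x, s) (0, 1))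
    (bound := fun _ => C) (Icc_mem_nhds (by linarith) (by linarith))
    (Filter.Eventually.of_forall fun s => (hslice s).aestronglyMeasurable)
    ((hslice t).continuousOn.integrableOn_compact isCompact_Icc)
    hslice'.aestronglyMeasurable ?_ ?_ ?_).2
  · filter_upwards [ae_restrict_mem measurableSet_Icc] with x hx s hs
    exact hC (x, s) ⟨hx, hs⟩
  · exact continuous_const.continuousOn.integrableOn_compact isCompact_Icc
  · exact Filter.Eventually.of_forall fun x s _ =>
      hasDerivAt_time_slice (hf.differentiable (by simp)) x s

/-- The pointwise form of the energy inequality: `∂_t ∑ ω_j F_j² + ∑ ω_j Ω_j·∇(F_j²) ≥ 0`,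
which is Cauchy–Schwarz for the weights `ω`. -/
lemma IsDualSol.pointwise {d N : ℕ} {ω : Fin N → ℝ} (hω : ∀ j, 0 < ω j) {σ T : ℝ} (hσ : 0 ≤ σ)
    {Ω : Fin N → (Fin d → ℝ)} {F : Fin N → (Fin d → ℝ) × ℝ → ℝ} (h : IsDualSol ω σ T Ω F)
    {t : ℝ} (ht : t ∈ Set.Icc 0 T) (x : Fin d → ℝ) :
    0 ≤ ∑ j, ω j * fderiv ℝ (fun p => F j p ^ 2) (x, t) (Ω j, 1) := by
  have hterm : ∀ j, ω j * fderiv ℝ (fun p => F j p ^ 2) (x, t) (Ω j, 1)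
      = 2 * σ * (ω j * F j (x, t) ^ 2
          - ω j * F j (x, t) * ((∑ l, ω l * F l (x, t)) / ∑ l, ω l)) := by
    intro j
    have hF := (((h.smooth j).differentiable (by simp)) (x, t)).hasFDerivAt.pow 2
    rw [hF.fderiv]
    simp only [_root_.smul_apply, smul_eq_mul]
    have e := h.eqn j x t ht
    have e' : fderiv ℝ (F j) (x, t) (Ω j, 1)
      = - (σ * ((∑ l, ω l * F l (x, t)) / (∑ l, ω l) - F j (x, t))) := by linarith
    rw [e']
    push_cast
    ring
  simp only [hterm]
  rw [← Finset.mul_sum, Finset.sum_sub_distrib, ← Finset.sum_mul]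
  refine mul_nonneg (by positivity) (sub_nonneg.2 ?_)
  have cs := Finset.sq_sum_div_le_sum_sq_div Finset.univ (fun j => ω j * F j (x, t))
    (g := ω) (fun j _ => hω j)
  rw [← mul_div_assoc, ← sq]
  refine cs.trans (le_of_eq (Finset.sum_congr rfl fun j _ => ?_))
  have := (hω j).ne'
  field_simp

lemma IsDualSol.energy_le {d N : ℕ} (hd : 1 ≤ d) {ω : Fin N → ℝ} (hω : ∀ j, 0 < ω j) {σ T : ℝ}
    (hσ : 0 ≤ σ) {Ω : Fin N → (Fin d → ℝ)} {F : Fin N → (Fin d → ℝ) × ℝ → ℝ}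
    (h : IsDualSol ω σ T Ω F) {t : ℝ} (ht : t ∈ Set.Icc 0 T) :
    ∑ j, ω j * ∫ x in Set.Icc (0 : Fin d → ℝ) 1, F j (x, t) ^ 2
      ≤ ∑ j, ω j * ∫ x in Set.Icc (0 : Fin d → ℝ) 1, F j (x, T) ^ 2 := by
  have hsq : ∀ j, ContDiff ℝ 1 (fun p => F j p ^ 2) :=
    fun j => ((h.smooth j).of_le (by simp)).pow 2
  have hE : ∀ s, HasDerivAt
      (fun s => ∑ j, ω j * ∫ x in Set.Icc (0 : Fin d → ℝ) 1, F j (x, s) ^ 2)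
      (∑ j, ω j * ∫ x in Set.Icc (0 : Fin d → ℝ) 1,
        fderiv ℝ (fun p => F j p ^ 2) (x, s) (0, 1)) s := fun s =>
    HasDerivAt.fun_sum fun j _ => (hasDerivAt_cell_integral (hsq j) s).const_mul (ω j)
  have hint : ∀ j s v, IntegrableOn
      (fun x => fderiv ℝ (fun p => F j p ^ 2) (x, s) v) (Set.Icc (0 : Fin d → ℝ) 1) := by
    intro j s v
    have hc : Continuous fun p => fderiv ℝ (fun p => F j p ^ 2) p v :=
      ((hsq j).continuous_fderiv (by simp)).clm_apply continuous_const
    exact (hc.comp (f := fun x => (x, s)) (by fun_prop)).continuousOn.integrableOn_compact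
      isCompact_Icc
  have hmono : MonotoneOn
      (fun s => ∑ j, ω j * ∫ x in Set.Icc (0 : Fin d → ℝ) 1, F j (x, s) ^ 2)
      (Set.Icc 0 T) := by
    refine monotoneOn_of_deriv_nonneg (convex_Icc 0 T)
      (fun s _ => (hE s).continuousAt.continuousWithinAt)
      (fun s _ => (hE s).differentiableAt.differentiableWithinAt) fun s hs => ?_
    rw [(hE s).deriv]
    -- By periodicity, `∂_t` may be replaced by the full transport derivative under the integral.
    have hshift : ∀ j, ∫ x in Set.Icc (0 : Fin d → ℝ) 1,
          fderiv ℝ (fun p => F j p ^ 2) (x, s) (0, 1)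
        = ∫ x in Set.Icc (0 : Fin d → ℝ) 1,
          fderiv ℝ (fun p => F j p ^ 2) (x, s) (Ω j, 1) := by
      intro j
      have hz := integral_fderiv_eq_zero hd (f := fun y => F j (y, s) ^ 2)
        ((hsq j).comp (f := fun y => (y, s)) (by fun_prop))
        (fun x i => by simpa using congrArg (· ^ 2) (h.per j (x, s) i)) (Ω j)
      have hz' : ∀ x, fderiv ℝ (fun y => F j (y, s) ^ 2) x (Ω j) = _ := fun x =>
        fderiv_space_slice ((hsq j).differentiable (by simp)) x (Ω j) s
      simp only [hz'] at hz
      rw [← sub_eq_zero, ← neg_eq_zero, neg_sub, ← integral_sub (hint _ _ _) (hint _ _ _), ← hz]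
      congr 1
      funext x
      rw [← map_sub]
      simp
    simp only [hshift, ← integral_const_mul]
    rw [← integral_finsetSum _ fun j _ => (hint j s (Ω j, 1)).const_mul (ω j)]
    exact integral_nonneg fun x => h.pointwise hω hσ (interior_subset hs) x
  exact hmono ht ⟨ht.1.trans ht.2, le_rfl⟩ ht.2

/-- For the dual discrete-ordinates system `∂_t φ_j + Ω_j·∇_x φ_j + σ(φ̄ − φ_j) = 0` with
smooth spatially periodic solutions, the weighted `H^ℓ` energy is nondecreasing in time. -/
theorem dual_sobolev_energy_monotone
    (d N : ℕ) (hd : 1 ≤ d) (hN : 1 ≤ N)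
    (ω : Fin N → ℝ) (hω : ∀ j, 0 < ω j)
    (σ : ℝ) (hσ : 0 ≤ σ)
    (T : ℝ) (hT : 0 < T)
    (ℓ : ℕ)
    (Ω : Fin N → (Fin d → ℝ))
    (φ : Fin N → (Fin d → ℝ) → ℝ → ℝ)
    (hφ_smooth : ∀ j, ContDiff ℝ (⊤ : ℕ∞) (fun p : (Fin d → ℝ) × ℝ => φ j p.1 p.2))
    (hφ_per : ∀ j (x : Fin d → ℝ) (t : ℝ) (i : Fin d),
      φ j (x + Pi.single i 1) t = φ j x t)
    (hφ_eq : ∀ j (x : Fin d → ℝ) (t : ℝ), t ∈ Set.Icc 0 T →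
      deriv (fun s => φ j x s) t + fderiv ℝ (fun y => φ j y t) x (Ω j)
        + σ * ((∑ l, ω l * φ l x t) / (∑ l, ω l) - φ j x t) = 0) :
    ∀ t ∈ Set.Icc 0 T,
      ∑ j, ω j *
        ∑ α ∈ (Fintype.piFinset fun _ : Fin d => Finset.range (ℓ + 1)).filter
            (fun α => ∑ i, α i ≤ ℓ),
          ∫ x in Set.Icc (0 : Fin d → ℝ) 1, (multiDeriv α (fun y => φ j y t) x) ^ 2
      ≤ ∑ j, ω j *
        ∑ α ∈ (Fintype.piFinset fun _ : Fin d => Finset.range (ℓ + 1)).filter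
            (fun α => ∑ i, α i ≤ ℓ),
          ∫ x in Set.Icc (0 : Fin d → ℝ) 1, (multiDeriv α (fun y => φ j y T) x) ^ 2 := by
  intro t ht
  have hdiff : ∀ j, Differentiable ℝ (fun p : (Fin d → ℝ) × ℝ => φ j p.1 p.2) :=
    fun j => (hφ_smooth j).differentiable (by simp)
  have hsol : IsDualSol ω σ T Ω (fun j p => φ j p.1 p.2) := by
    refine ⟨hφ_smooth, fun j p i => ?_, fun j x s hs => ?_⟩
    · simpa using hφ_per j p.1 p.2 i
    · have e := hφ_eq j x s hs
      have e1 : deriv (fun s => φ j x s) s = _ := (hasDerivAt_time_slice (hdiff j) x s).deriv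
      have e2 : fderiv ℝ (fun y => φ j y s) x (Ω j) = _ :=
        fderiv_space_slice (hdiff j) x (Ω j) s
      rw [e1, e2, ← map_add] at e
      simpa using e
  simp only [Finset.mul_sum]
  rw [Finset.sum_comm, Finset.sum_comm (s := Finset.univ)]
  exact Finset.sum_le_sum fun α _ => (hsol.multiDeriv α).energy_le hd hω hσ ht
end

section
/- Let Ω_1,…,Ω_N ∈ ℝ^d be constant vectors, let η : ℝ^d × [0,T] → ℝ be smooth and periodic in the spatial variable, and suppose e_1,…,e_N : ℝ^d × [0,T] → ℝ are smooth functions, periodic in the spatial variable, satisfying ∂_t e_j + Ω_j·∇_x e_j = σ(ē − e_j) + η for each j, where ē = (1/W)∑_j ω_j e_j. Then for every t ∈ [0,T] the energy identity (1/2) d/dt ∑_{j=1}^N ω_j ‖e_j(·,t)‖²_{L²([0,1]^d)} + σ ∑_{j=1}^N ω_j ‖e_j(·,t) − ē(·,t)‖²_{L²([0,1]^d)} = ∑_{j=1}^N ω_j ∫_{[0,1]^d} e_j(x,t) η(x,t) dx holds. -/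
open MeasureTheory

/-!
Multiply the `j`-th equation by `ω_j e_j`, sum over `j` and integrate over the unit cell.
Differentiation under the integral sign (`hasDerivAt_setIntegral_Icc`) turns the time-derivative
term into the derivative of the energy.  The transport term `e_j Ω_j·∇e_j = (1/2) Ω_j·∇(e_j²)`
is the divergence of a periodic vector field, so its integral vanishes
(`integral_fderiv_periodic`): in the divergence theorem the opposite faces cancel.  The relaxation
term is handled pointwise by `sum_mul_sub_average`, which rests on `∑ ω_j (e_j − ē) = 0`.
-/

/-- The integral over the unit cell of a directional derivative of a periodic `C¹` function
vanishes. -/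
lemma integral_fderiv_periodic {d : ℕ} (g : (Fin d → ℝ) → ℝ) (hg : ContDiff ℝ 1 g)
    (hper : ∀ (x : Fin d → ℝ) (i : Fin d), g (x + Pi.single i 1) = g x) (v : Fin d → ℝ) :
    ∫ x in Set.Icc (0 : Fin d → ℝ) 1, fderiv ℝ g x v = 0 := by
  cases d with
  | zero =>
    have hv : ∀ x, fderiv ℝ g x v = 0 := fun x => by
      rw [show v = 0 from Subsingleton.elim _ _, map_zero]
    simp only [hv, integral_zero]
  | succ n =>
    have hcont : Continuous (fun x => fderiv ℝ g x v) :=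
      (hg.continuous_fderiv one_ne_zero).clm_apply continuous_const
    -- The vector field whose divergence is integrated is `x ↦ g x • v`.
    have hdiv : ∀ x, ∑ i, ((fderiv ℝ g x).smulRight v) (Pi.single i 1) i = fderiv ℝ g x v := by
      intro x
      conv_rhs => rw [← Finset.univ_sum_single v, map_sum]
      refine Finset.sum_congr rfl fun i _ => ?_
      have : (Pi.single i (v i) : Fin (n + 1) → ℝ) = v i • Pi.single i 1 := by
        rw [← Pi.single_smul]; simp
      rw [this, map_smul]
      simp [mul_comm]
    have key := integral_divergence_of_hasFDerivAt_off_countable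
      (0 : Fin (n + 1) → ℝ) 1 zero_le_one (fun x => g x • v)
      (fun x => (fderiv ℝ g x).smulRight v) ∅ Set.countable_empty
      (hg.continuous.smul continuous_const).continuousOn
      (fun x _ => ((hg.differentiable one_ne_zero x).hasFDerivAt).smul_const v)
      (by
        simp only [hdiv]
        exact hcont.continuousOn.integrableOn_compact isCompact_Icc)
    simp only [hdiv] at key
    rw [key]
    refine Finset.sum_eq_zero fun i _ => ?_
    rw [sub_eq_zero]
    congr 1
    ext y
    have : (i.insertNth (1 : ℝ) y : Fin (n + 1) → ℝ)
        = i.insertNth (0 : ℝ) y + Pi.single i 1 := by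
      ext k
      refine Fin.succAboveCases i ?_ (fun k => ?_) k <;> simp
    simp [this, hper]

/-- Differentiation under the integral sign over the unit cell, for a jointly `C¹` integrand. -/
lemma hasDerivAt_setIntegral_Icc {d : ℕ} (F : (Fin d → ℝ) × ℝ → ℝ) (hF : ContDiff ℝ 1 F)
    (t : ℝ) :
    HasDerivAt (fun s => ∫ x in Set.Icc (0 : Fin d → ℝ) 1, F (x, s))
      (∫ x in Set.Icc (0 : Fin d → ℝ) 1, fderiv ℝ F (x, t) (0, 1)) t := by
  have hF' : Continuous (fun p => fderiv ℝ F p (0, 1)) :=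
    (hF.continuous_fderiv one_ne_zero).clm_apply continuous_const
  obtain ⟨C, hC⟩ := ((isCompact_Icc (a := (0 : Fin d → ℝ)) (b := 1)).prod
    (isCompact_closedBall t 1)).exists_bound_of_continuousOn hF'.continuousOn
  have hmeas : ∀ s, Continuous (fun x : Fin d → ℝ => F (x, s)) := fun s =>
    hF.continuous.comp (by fun_prop)
  refine (hasDerivAt_integral_of_dominated_loc_of_deriv_le (bound := fun _ => C)
    (F' := fun s x => fderiv ℝ F (x, s) (0, 1))
    (Metric.closedBall_mem_nhds t one_pos) ?_ ?_ ?_ ?_ ?_ ?_).2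
  · exact Filter.Eventually.of_forall fun s => (hmeas s).aestronglyMeasurable
  · exact (hmeas t).continuousOn.integrableOn_compact isCompact_Icc
  · exact (hF'.comp (by fun_prop : Continuous fun x : Fin d → ℝ => (x, t))).aestronglyMeasurable
  · filter_upwards [ae_restrict_mem measurableSet_Icc] with x hx s hs
    exact hC (x, s) ⟨hx, hs⟩
  · exact integrableOn_const isCompact_Icc.measure_lt_top.ne
  · refine Filter.Eventually.of_forall fun x s _ => ?_
    exact (hF.differentiable one_ne_zero (x, s)).hasFDerivAt.comp_hasDerivAt s
      ((hasDerivAt_const s x).prodMk (hasDerivAt_id s))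

/-- Pointwise dissipation of the relaxation term: testing `ē − e_j` against `ω_j e_j` gives minus
the weighted variance. -/
lemma sum_mul_sub_average {N : ℕ} (ω a : Fin N → ℝ) (hW : ∑ l, ω l ≠ 0) :
    ∑ j, ω j * (a j * ((∑ l, ω l * a l) / (∑ l, ω l) - a j))
      = -∑ j, ω j * (a j - (∑ l, ω l * a l) / (∑ l, ω l)) ^ 2 := by
  set m := (∑ l, ω l * a l) / (∑ l, ω l) with hm
  have h0 : ∑ j, ω j * (a j - m) = 0 := by
    simp only [mul_sub, Finset.sum_sub_distrib, ← Finset.sum_mul]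
    rw [hm]; field_simp; ring
  have h1 : ∑ j, ω j * (a j * (m - a j)) + ∑ j, ω j * (a j - m) ^ 2
      = -m * ∑ j, ω j * (a j - m) := by
    rw [Finset.mul_sum, ← Finset.sum_add_distrib]
    exact Finset.sum_congr rfl fun j _ => by ring
  rw [h0] at h1
  linarith

/-- For the error system `∂_t e_j + Ω_j·∇_x e_j = σ(ē − e_j) + η` with smooth spatially
periodic data, the energy identity
`(1/2) d/dt ∑_j ω_j ‖e_j‖² + σ ∑_j ω_j ‖e_j − ē‖² = ∑_j ω_j ∫ e_j η` holds on `[0,T]`. -/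
theorem error_energy_identity
    (d N : ℕ) (hd : 1 ≤ d) (hN : 1 ≤ N)
    (ω : Fin N → ℝ) (hω : ∀ j, 0 < ω j)
    (σ : ℝ) (hσ : 0 ≤ σ)
    (T : ℝ) (hT : 0 < T)
    (Ω : Fin N → (Fin d → ℝ))
    (η : (Fin d → ℝ) → ℝ → ℝ)
    (hη_smooth : ContDiff ℝ (⊤ : ℕ∞) (fun p : (Fin d → ℝ) × ℝ => η p.1 p.2))
    (hη_per : ∀ (x : Fin d → ℝ) (t : ℝ) (i : Fin d), η (x + Pi.single i 1) t = η x t)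
    (e : Fin N → (Fin d → ℝ) → ℝ → ℝ)
    (he_smooth : ∀ j, ContDiff ℝ (⊤ : ℕ∞) (fun p : (Fin d → ℝ) × ℝ => e j p.1 p.2))
    (he_per : ∀ j (x : Fin d → ℝ) (t : ℝ) (i : Fin d),
      e j (x + Pi.single i 1) t = e j x t)
    (he_eq : ∀ j (x : Fin d → ℝ) (t : ℝ), t ∈ Set.Icc 0 T →
      deriv (fun s => e j x s) t + fderiv ℝ (fun y => e j y t) x (Ω j)
        = σ * ((∑ l, ω l * e l x t) / (∑ l, ω l) - e j x t) + η x t) :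
    ∀ t ∈ Set.Icc 0 T,
      HasDerivAt
        (fun s => (1 / 2) * ∑ j, ω j * ∫ x in Set.Icc (0 : Fin d → ℝ) 1, (e j x s) ^ 2)
        ((∑ j, ω j * ∫ x in Set.Icc (0 : Fin d → ℝ) 1, e j x t * η x t)
          - σ * ∑ j, ω j * ∫ x in Set.Icc (0 : Fin d → ℝ) 1,
              (e j x t - (∑ l, ω l * e l x t) / (∑ l, ω l)) ^ 2) t := by
  intro t ht
  have hW : ∑ l, ω l ≠ 0 :=
    (Finset.sum_pos (fun l _ => hω l) ⟨⟨0, hN⟩, Finset.mem_univ _⟩).ne'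
  have hsm : ∀ j, ContDiff ℝ 1 (fun p : (Fin d → ℝ) × ℝ => e j p.1 p.2) := fun j =>
    (he_smooth j).of_le (by exact_mod_cast le_top)
  have hsq : ∀ j, ContDiff ℝ 1 (fun p : (Fin d → ℝ) × ℝ => e j p.1 p.2 ^ 2) := fun j =>
    (hsm j).pow 2
  have hsl : ∀ j, ContDiff ℝ 1 (fun x : Fin d → ℝ => e j x t) := fun j =>
    (hsm j).comp (contDiff_id.prodMk contDiff_const)
  have hcη : Continuous (fun x => η x t) :=
    hη_smooth.continuous.comp (by fun_prop : Continuous fun x : Fin d → ℝ => (x, t))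
  have hce : ∀ j, Continuous (fun x => e j x t) := fun j => (hsl j).continuous
  have hint : ∀ f : (Fin d → ℝ) → ℝ, Continuous f → IntegrableOn f (Set.Icc 0 1) :=
    fun f hf => hf.continuousOn.integrableOn_compact isCompact_Icc
  have hderiv := (HasDerivAt.fun_sum (u := Finset.univ) fun j _ =>
    (hasDerivAt_setIntegral_Icc _ (hsq j) t).const_mul (ω j)).const_mul (1 / 2 : ℝ)
  refine hderiv.congr_deriv ?_
  -- Chain rule in time and in space for `e_j²`.
  have htime : ∀ j x, fderiv ℝ (fun p : (Fin d → ℝ) × ℝ => e j p.1 p.2 ^ 2) (x, t) (0, 1)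
      = 2 * (e j x t * deriv (fun s => e j x s) t) := by
    intro j x
    have h1 : HasDerivAt (fun s => e j x s ^ 2) _ t :=
      ((hsq j).differentiable one_ne_zero (x, t)).hasFDerivAt.comp_hasDerivAt t
        ((hasDerivAt_const t x).prodMk (hasDerivAt_id t))
    have h2 : DifferentiableAt ℝ (fun s => e j x s) t :=
      (((hsm j).comp (contDiff_const.prodMk contDiff_id)).differentiable one_ne_zero) t
    rw [h1.unique (h2.hasDerivAt.pow 2)]
    simp; ring
  have hspace : ∀ j x, fderiv ℝ (fun y => e j y t ^ 2) x (Ω j)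
      = 2 * (e j x t * fderiv ℝ (fun y => e j y t) x (Ω j)) := by
    intro j x
    rw [(((hsl j).differentiable one_ne_zero x).hasFDerivAt.pow 2).fderiv]
    simp; ring
  have htrans : ∀ j, ∫ x in Set.Icc (0 : Fin d → ℝ) 1,
      e j x t * fderiv ℝ (fun y => e j y t) x (Ω j) = 0 := by
    intro j
    have h := integral_fderiv_periodic (fun y => e j y t ^ 2) ((hsl j).pow 2)
      (fun x i => by simp only [he_per]) (Ω j)
    simp only [hspace, integral_const_mul] at h
    linarith
  have hcg : ∀ j, Continuous (fun x => fderiv ℝ (fun y => e j y t) x (Ω j)) := fun j =>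
    ((hsl j).continuous_fderiv one_ne_zero).clm_apply continuous_const
  have hcm : Continuous (fun x => (∑ l, ω l * e l x t) / (∑ l, ω l)) := by fun_prop
  have hstep : ∀ j, ∫ x in Set.Icc (0 : Fin d → ℝ) 1,
        fderiv ℝ (fun p : (Fin d → ℝ) × ℝ => e j p.1 p.2 ^ 2) (x, t) (0, 1)
      = 2 * (σ * (∫ x in Set.Icc (0 : Fin d → ℝ) 1,
            e j x t * ((∑ l, ω l * e l x t) / (∑ l, ω l) - e j x t))
          + ∫ x in Set.Icc (0 : Fin d → ℝ) 1, e j x t * η x t) := by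
    intro j
    have hpt : ∀ x, fderiv ℝ (fun p : (Fin d → ℝ) × ℝ => e j p.1 p.2 ^ 2) (x, t) (0, 1)
        = 2 * (σ * (e j x t * ((∑ l, ω l * e l x t) / (∑ l, ω l) - e j x t))
          + e j x t * η x t - e j x t * fderiv ℝ (fun y => e j y t) x (Ω j)) := by
      intro x
      rw [htime, eq_sub_of_add_eq (he_eq j x t ht)]
      ring
    simp only [hpt]
    rw [integral_const_mul, integral_sub, integral_add, integral_const_mul, htrans, sub_zero]
    · exact hint _ (continuous_const.mul ((hce j).mul (hcm.sub (hce j))))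
    · exact hint _ ((hce j).mul hcη)
    · exact hint _ ((continuous_const.mul ((hce j).mul (hcm.sub (hce j)))).add ((hce j).mul hcη))
    · exact hint _ ((hce j).mul (hcg j))
  have hrelax : ∑ j, ω j * ∫ x in Set.Icc (0 : Fin d → ℝ) 1,
        e j x t * ((∑ l, ω l * e l x t) / (∑ l, ω l) - e j x t)
      = -∑ j, ω j * ∫ x in Set.Icc (0 : Fin d → ℝ) 1,
          (e j x t - (∑ l, ω l * e l x t) / (∑ l, ω l)) ^ 2 := by
    simp only [← integral_const_mul]
    rw [← integral_finsetSum, ← integral_finsetSum, ← integral_neg]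
    · congr 1
      ext x
      exact sum_mul_sub_average ω (fun j => e j x t) hW
    · exact fun j _ => hint _ (continuous_const.mul (((hce j).sub hcm).pow 2))
    · exact fun j _ => hint _ (continuous_const.mul ((hce j).mul (hcm.sub (hce j))))
  simp only [hstep]
  rw [sub_eq_add_neg, ← mul_neg, ← hrelax, Finset.mul_sum, Finset.mul_sum,
    ← Finset.sum_add_distrib]
  exact Finset.sum_congr rfl fun j _ => by ring
end

section
/- Let T > 0, let u : [0,T] → ℝ be differentiable with u(t) ≥ 0 for all t and u(0) = 0, and let q : [0,T] → ℝ be continuous with q(t) ≥ 0 for all t. If u'(t) ≤ 2·√(u(t))·q(t) for all t ∈ [0,T], then √(u(t)) ≤ ∫_0^t q(s) ds for all t ∈ [0,T]. -/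
/-! The regularised function `√(u + ε²)` is differentiable even where `u` vanishes, and its
derivative `u' / (2 √(u + ε²))` is at most `q` because `√u ≤ √(u + ε²)`. Comparing derivatives
gives `√u ≤ √(u + ε²) ≤ ε + ∫ q` for every `ε > 0`, and `ε → 0` yields the claim. -/

/-- Square-root Gronwall inequality: if `u ≥ 0` is differentiable on `[0,T]` with `u(0) = 0`,
`q ≥ 0` is continuous on `[0,T]`, and `u'(t) ≤ 2 √(u t) q t` on `[0,T]`, then
`√(u t) ≤ ∫_0^t q(s) ds` on `[0,T]`. -/
theorem sqrt_gronwall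
    (T : ℝ) (hT : 0 < T)
    (u q : ℝ → ℝ)
    (hu_diff : ∀ t ∈ Set.Icc (0 : ℝ) T, DifferentiableAt ℝ u t)
    (hu_nonneg : ∀ t ∈ Set.Icc (0 : ℝ) T, 0 ≤ u t)
    (hu0 : u 0 = 0)
    (hq_cont : ContinuousOn q (Set.Icc (0 : ℝ) T))
    (hq_nonneg : ∀ t ∈ Set.Icc (0 : ℝ) T, 0 ≤ q t)
    (hineq : ∀ t ∈ Set.Icc (0 : ℝ) T, deriv u t ≤ 2 * Real.sqrt (u t) * q t) :
    ∀ t ∈ Set.Icc (0 : ℝ) T, Real.sqrt (u t) ≤ ∫ s in (0 : ℝ)..t, q s := by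
  -- Extending `q` continuously to all of `ℝ` makes its primitive differentiable at the endpoints.
  obtain ⟨p, hp, hpq⟩ : ∃ p : ℝ → ℝ, Continuous p ∧ ∀ t ∈ Set.Icc (0 : ℝ) T, p t = q t :=
    ⟨Set.IccExtend hT.le ((Set.Icc (0 : ℝ) T).domRestrict q),
      (continuousOn_iff_continuous_domRestrict.1 hq_cont).Icc_extend',
      fun t ht => by rw [Set.IccExtend_of_mem _ _ ht]; rfl⟩
  intro t ht
  have hint : ∫ s in (0 : ℝ)..t, q s = ∫ s in (0 : ℝ)..t, p s := by
    refine intervalIntegral.integral_congr fun s hs => ?_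
    rw [Set.uIcc_of_le ht.1] at hs
    exact (hpq s ⟨hs.1, hs.2.trans ht.2⟩).symm
  rw [hint]
  refine le_of_forall_pos_le_add fun ε hε => ?_
  have hpos : ∀ x ∈ Set.Icc (0 : ℝ) T, 0 < u x + ε ^ 2 := fun x hx => by
    have := hu_nonneg x hx
    positivity
  have hf : ∀ x ∈ Set.Icc (0 : ℝ) T, HasDerivAt (fun x => √(u x + ε ^ 2))
      (deriv u x / (2 * √(u x + ε ^ 2))) x := fun x hx =>
    ((hu_diff x hx).hasDerivAt.add_const _).sqrt (hpos x hx).ne'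
  have hB : ∀ x, HasDerivAt (fun x => (∫ s in (0 : ℝ)..x, p s) + ε) (p x) x := fun x =>
    (hp.integral_hasStrictDerivAt 0 x).hasDerivAt.add_const _
  have key := image_le_of_deriv_right_le_deriv_boundary
    (fun x hx => (hf x hx).continuousAt.continuousWithinAt)
    (fun x hx => (hf x (Set.Ico_subset_Icc_self hx)).hasDerivWithinAt)
    (by simp [hu0, Real.sqrt_sq hε.le])
    (fun x _ => (hB x).continuousAt.continuousWithinAt)
    (fun x _ => (hB x).hasDerivWithinAt)
    (fun x hx => by
      have hx' := Set.Ico_subset_Icc_self hx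
      have hs := Real.sqrt_pos.2 (hpos x hx')
      have hle : √(u x) ≤ √(u x + ε ^ 2) := Real.sqrt_le_sqrt (by nlinarith)
      rw [div_le_iff₀ (by positivity), hpq x hx']
      nlinarith [hineq x hx', mul_le_mul_of_nonneg_right hle (hq_nonneg x hx')]) ht
  exact (Real.sqrt_le_sqrt (by nlinarith)).trans key
end

section
/- Let r ≥ 0 be an integer and let K : ℝ → ℝ be an integrable, compactly supported function satisfying the moment conditions ∫_ℝ K(y) dy = 1 and ∫_ℝ K(y) y^j dy = 0 for every 1 ≤ j ≤ r. For H > 0 let K_H(x) = (1/H) K(x/H) be the scaled kernel. If f : ℝ → ℝ is (r+1)-times continuously differentiable with M = sup_{x∈ℝ} |f^{(r+1)}(x)| < ∞, then for every x ∈ ℝ, | f(x) − ∫_ℝ K_H(y) f(x − y) dy | ≤ ( M · H^{r+1} / (r+1)! ) · ∫_ℝ |K(y)| · |y|^{r+1} dy; in particular the filtering error is O(H^{r+1}). -/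
open MeasureTheory

/-!
After the substitution `y = H u`, the filtered value is `∫ K(u) f(x - H u) du`. The degree-`r`
Taylor polynomial of `f` at `x`, evaluated at `x - H u`, is a polynomial in `u` whose constant
term is `f x`; the moment conditions on `K` make its integral against `K` equal to `f x`
(`integral_kernel_mul_polynomial`). Hence the error is the integral of `K` against the Taylor
remainder, which the Lagrange form bounds by `M |H u|^(r+1) / (r+1)!` (`abs_sub_taylor_le`).
Compact support of `K` makes every integral involved converge.
-/

lemma abs_sub_taylor_le (r : ℕ) (f : ℝ → ℝ) (hf : ContDiff ℝ (r + 1) f)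
    (M : ℝ) (hM : ∀ x : ℝ, |iteratedDeriv (r + 1) f x| ≤ M) (x z : ℝ) :
    |f z - ∑ k ∈ Finset.range (r + 1),
        ((Nat.factorial k : ℝ)⁻¹ * (z - x) ^ k) * iteratedDeriv k f x|
      ≤ M / (Nat.factorial (r + 1) : ℝ) * |z - x| ^ (r + 1) := by
  rcases eq_or_ne x z with rfl | hxz
  · simp [Finset.sum_range_succ']
  have hu : UniqueDiffOn ℝ (Set.uIcc x z) := uniqueDiffOn_uIcc hxz
  have hf1 : ContDiff ℝ ((r + 1 : ℕ) : WithTop ℕ∞) f := by exact_mod_cast hf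
  have hder : ∀ k ≤ r + 1, ∀ t ∈ Set.uIcc x z,
      iteratedDerivWithin k f (Set.uIcc x z) t = iteratedDeriv k f t := fun k hk t ht =>
    iteratedDerivWithin_eq_iteratedDeriv hu
      ((hf1.of_le (by exact_mod_cast hk)).contDiffAt) ht
  have hdiff : DifferentiableOn ℝ (iteratedDerivWithin r f (Set.uIcc x z)) (Set.uIoo x z) :=
    (hf1.contDiffOn.differentiableOn_iteratedDerivWithin
      (by exact_mod_cast Nat.lt_succ_self r) hu).mono Set.uIoo_subset_uIcc_self
  obtain ⟨t, ht, h⟩ := taylor_mean_remainder_lagrange hxz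
    ((hf1.of_le (by exact_mod_cast Nat.le_succ r)).contDiffOn) hdiff
  rw [taylor_within_apply, hder _ le_rfl t (Set.uIoo_subset_uIcc_self ht)] at h
  have hsum : ∑ k ∈ Finset.range (r + 1),
        ((Nat.factorial k : ℝ)⁻¹ * (z - x) ^ k) • iteratedDerivWithin k f (Set.uIcc x z) x
      = ∑ k ∈ Finset.range (r + 1),
        ((Nat.factorial k : ℝ)⁻¹ * (z - x) ^ k) * iteratedDeriv k f x := by
    refine Finset.sum_congr rfl fun k hk => ?_
    rw [hder k (Finset.mem_range.1 hk).le x Set.left_mem_uIcc, smul_eq_mul]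
  rw [← hsum, h, abs_div, abs_mul, abs_pow, Nat.abs_cast, div_mul_eq_mul_div]
  gcongr
  exact hM t

lemma integrable_mul_continuous_of_hasCompactSupport {K g : ℝ → ℝ} (hK : Integrable K)
    (hs : HasCompactSupport K) (hg : Continuous g) : Integrable (fun u => K u * g u) := by
  have h : IntegrableOn (fun u => K u * g u) (tsupport K) :=
    hK.integrableOn.mul_continuousOn hg.continuousOn hs
  refine (integrableOn_iff_integrable_of_support_subset fun u hu => ?_).1 h
  exact subset_tsupport K (left_ne_zero_of_mul hu)

/-- Integration against a kernel of unit mass with `r` vanishing moments returns the constant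
term of a polynomial of degree at most `r`. -/
lemma integral_kernel_mul_polynomial (r : ℕ) (K : ℝ → ℝ) (hK_int : Integrable K)
    (hK_supp : HasCompactSupport K) (hK_mass : ∫ y : ℝ, K y = 1)
    (hK_moments : ∀ j : ℕ, 1 ≤ j → j ≤ r → ∫ y : ℝ, K y * y ^ j = 0) (c : ℕ → ℝ) :
    ∫ u : ℝ, K u * ∑ k ∈ Finset.range (r + 1), c k * u ^ k = c 0 := by
  have h : ∀ u, K u * ∑ k ∈ Finset.range (r + 1), c k * u ^ k
      = ∑ k ∈ Finset.range (r + 1), c k * (K u * u ^ k) := fun u => by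
    rw [Finset.mul_sum]
    exact Finset.sum_congr rfl fun k _ => by ring
  simp_rw [h]
  rw [integral_finsetSum _ fun k _ => (integrable_mul_continuous_of_hasCompactSupport hK_int
    hK_supp (continuous_pow k)).const_mul (c k)]
  simp_rw [integral_const_mul]
  rw [Finset.sum_range_succ', Finset.sum_eq_zero]
  · simp [hK_mass]
  · intro k hk
    rw [hK_moments (k + 1) (by omega) (by have := Finset.mem_range.1 hk; omega), mul_zero]

open MeasureTheory

/-- Accuracy of filtering with a scaled kernel: if `K` is integrable, compactly supported,
has unit mass and `r` vanishing moments, `K_H(x) = (1/H)K(x/H)`, and `f` is `(r+1)`-times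
continuously differentiable with `|f^{(r+1)}| ≤ M` everywhere, then for every `x`,
`|f(x) − (K_H ⋆ f)(x)| ≤ (M H^{r+1}/(r+1)!) ∫ |K(y)| |y|^{r+1} dy`;
in particular the filtering error is `O(H^{r+1})`. -/
theorem scaled_kernel_filtering_error (r : ℕ)
    (K : ℝ → ℝ) (hK_int : Integrable K) (hK_supp : HasCompactSupport K)
    (hK_mass : ∫ y : ℝ, K y = 1)
    (hK_moments : ∀ j : ℕ, 1 ≤ j → j ≤ r → ∫ y : ℝ, K y * y ^ j = 0)
    (H : ℝ) (hH : 0 < H)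
    (f : ℝ → ℝ) (hf : ContDiff ℝ (r + 1) f)
    (M : ℝ) (hM : ∀ x : ℝ, |iteratedDeriv (r + 1) f x| ≤ M) :
    ∀ x : ℝ,
      |f x - ∫ y : ℝ, (1 / H) * K (y / H) * f (x - y)|
        ≤ (M * H ^ (r + 1) / (Nat.factorial (r + 1) : ℝ))
            * ∫ y : ℝ, |K y| * |y| ^ (r + 1) := by
  intro x
  have hsubst : ∫ y : ℝ, (1 / H) * K (y / H) * f (x - y) = ∫ u : ℝ, K u * f (x - H * u) := by
    have h := Measure.integral_comp_div (fun u => (1 / H) * (K u * f (x - H * u))) H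
    simp only [integral_const_mul] at h
    rw [abs_of_pos hH, smul_eq_mul, ← mul_assoc, mul_one_div_cancel hH.ne', one_mul] at h
    rw [← h, ← integral_const_mul]
    congr 1 with y
    rw [mul_div_cancel₀ y hH.ne', mul_assoc]
  set c : ℕ → ℝ := fun k => (Nat.factorial k : ℝ)⁻¹ * (-H) ^ k * iteratedDeriv k f x with hc
  have hpoly := integral_kernel_mul_polynomial r K hK_int hK_supp hK_mass hK_moments c
  have hc0 : c 0 = f x := by simp [hc]
  have hrem : ∀ u, |(∑ k ∈ Finset.range (r + 1), c k * u ^ k) - f (x - H * u)|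
      ≤ M * H ^ (r + 1) / (Nat.factorial (r + 1) : ℝ) * |u| ^ (r + 1) := fun u => by
    have h := abs_sub_taylor_le r f hf M hM x (x - H * u)
    have hz : x - H * u - x = -H * u := by ring
    rw [hz, abs_sub_comm, abs_mul, abs_neg, abs_of_pos hH, mul_pow] at h
    convert h using 1
    · congr 2
      refine Finset.sum_congr rfl fun k _ => ?_
      rw [mul_pow]
      ring
    · ring
  have hfc : Continuous fun u : ℝ => f (x - H * u) := hf.continuous.comp (by fun_prop)
  rw [hsubst, ← hc0, ← hpoly, ← integral_sub
    (integrable_mul_continuous_of_hasCompactSupport hK_int hK_supp (by fun_prop))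
    (integrable_mul_continuous_of_hasCompactSupport hK_int hK_supp hfc), ← integral_const_mul,
    ← Real.norm_eq_abs]
  refine norm_integral_le_of_norm_le ?_ (Filter.Eventually.of_forall fun u => ?_)
  · refine Integrable.const_mul ?_ _
    have h := (integrable_mul_continuous_of_hasCompactSupport hK_int hK_supp
      (continuous_pow (r + 1))).abs
    simpa only [abs_mul, abs_pow] using h
  · rw [← mul_sub, Real.norm_eq_abs, abs_mul, mul_left_comm]
    exact mul_le_mul_of_nonneg_left (hrem u) (abs_nonneg _)
end
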